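/- arXiv:2205.06685 — 2 statements merged into one kernel-verified Lean document; each statement's English description precedes it below -/
import Mathlib

section
/- Let (P_n) be the Perrin sequence defined by P_0 = 3, P_1 = 0, P_2 = 2, and P_{n+3} = P_{n+1} + P_n for n ≥ 0. Then for any prime p not dividing 2·3·23, the following are equivalent: (1) P_{p+1} ≡ 2 (mod p); (2) there exist integers X, Y with p = X^2 + 23Y^2; (3) -23 is a quadratic residue modulo p and x^3 - x - 1 ≡ 0 (mod p) has a solution in Z/pZ. -/
/-!
Put `M = (p ^ 2 - 1) / 3`. In characteristic `p` the Frobenius map permutes the roots `α, β, γ` of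
`x ^ 3 - x - 1`, so `P (p + 1) = α ^ (p + 1) + β ^ (p + 1) + γ ^ (p + 1)` is
`α ^ 2 + β ^ 2 + γ ^ 2 = 2` when it fixes them, `αβ + βγ + γα = -1` when it is a `3`-cycle, and
`α ^ 2 + 2βγ ≠ 2` when it is a transposition. Hence (1) says that the cubic splits modulo `p`, and
this is (3) since its discriminant is `-23`.

If `-23` is a square modulo `p`, reduction of binary quadratic forms of discriminant `-23` gives
`4p = X ^ 2 + 23Y ^ 2` with `X, Y` even, which is (2), or `8p = X ^ 2 + 23Y ^ 2` with `X, Y` odd.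
What remains is that the cubic has a root modulo `p` in the first case and none in the second. By
Cardano's formula it has a root exactly when `(A / B) ^ M = 1`, where `A` and `B` are the roots of
`t ^ 2 - t + 1 / 27`. Up to sign, both `A / B` and its square are quotients `θ / star θ` with `θ` an
Eisenstein integer built from `X` and `Y`, so the condition is `χ p = 1` for a cubic residue symbol
`χ` with modulus `θ`. By cubic reciprocity `χ` is periodic modulo the norm of `θ`, which gives
`χ p = 1` in the first case and `χ (2p) = 1` in the second, where moreover `χ 2 ≠ 1`.
-/

open Polynomial QuadraticAlgebra

namespace Perrin

/-- The ring `ℤ[ω]` of Eisenstein integers, where `ω² = -1 - ω`; the pair `⟨a, b⟩` stands for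
`a + b ω`. -/
abbrev EisensteinInt := QuadraticAlgebra ℤ (-1) (-1)

namespace EisensteinInt

theorem norm_eq (z : EisensteinInt) : z.norm = z.re ^ 2 - z.re * z.im + z.im ^ 2 := by
  rw [norm_def]; ring

theorem norm_nonneg (z : EisensteinInt) : 0 ≤ z.norm := by
  rw [norm_eq]; nlinarith [sq_nonneg (2 * z.re - z.im), sq_nonneg z.im]

theorem eq_zero_of_norm_eq_zero {z : EisensteinInt} (hz : z.norm = 0) : z = 0 := by
  rw [norm_eq] at hz
  have him : z.im = 0 := by nlinarith [sq_nonneg (2 * z.re - z.im)]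
  have hre : z.re = 0 := by simpa [him] using hz
  ext <;> simp [hre, him]

instance : NoZeroDivisors EisensteinInt where
  eq_zero_or_eq_zero_of_mul_eq_zero {a b} h := by
    have hnorm : a.norm * b.norm = 0 := by rw [← map_mul, h, QuadraticAlgebra.norm_zero]
    exact (mul_eq_zero.1 hnorm).imp eq_zero_of_norm_eq_zero eq_zero_of_norm_eq_zero

instance : IsDomain EisensteinInt := NoZeroDivisors.to_isDomain _

theorem omega_sq_add_omega_add_one : (ω : EisensteinInt) ^ 2 + ω + 1 = 0 := by
  rw [sq]; ext <;> simp

theorem isPrimitiveRoot_omega : IsPrimitiveRoot (ω : EisensteinInt) 3 := by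
  have hω : (ω : EisensteinInt) ≠ 1 := fun h => by simpa using congrArg im h
  have hord : orderOf (ω : EisensteinInt) = 3 :=
    orderOf_eq_prime (by linear_combination (ω - 1) * omega_sq_add_omega_add_one) hω
  exact hord ▸ .orderOf _

theorem star_eq_sq_of_pow_three_eq_one {z : EisensteinInt} (hz : z ^ 3 = 1) : star z = z ^ 2 := by
  have hnorm : z.norm = 1 :=
    (pow_eq_one_iff_of_nonneg (norm_nonneg z) three_ne_zero).1 (by rw [← map_pow, hz, map_one])
  have hstar : z * star z = 1 := by rw [← algebraMap_norm_eq_mul_star, hnorm, map_one]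
  linear_combination (-star z) * hz + z ^ 2 * hstar

theorem eq_one_of_map_eq_one {R : Type*} [Ring R] (h3 : (3 : R) ≠ 0) (f : EisensteinInt →+* R)
    {z : EisensteinInt} (hz : z ^ 3 = 1) (hfz : f z = 1) : z = 1 := by
  by_contra hz1
  have hsum : z ^ 2 + z + 1 = 0 :=
    (mul_eq_zero.1 (by linear_combination hz : (z - 1) * (z ^ 2 + z + 1) = 0)).resolve_left
      (sub_ne_zero.2 hz1)
  have hmap := congrArg f hsum
  simp only [map_add, map_pow, hfz, map_one, map_zero] at hmap
  exact h3 (by rw [← hmap]; norm_num)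

theorem nonempty_ringHom (F : Type*) [Field F] [IsAlgClosed F] :
    Nonempty (EisensteinInt →+* F) := by
  obtain ⟨u, hu⟩ := IsAlgClosed.exists_root (X ^ 2 + X + 1 : F[X])
    (by rw [show (X ^ 2 + X + 1 : F[X]).degree = 2 by compute_degree!]; norm_num)
  simp only [IsRoot.def, eval_add, eval_pow, eval_X, eval_one] at hu
  exact ⟨(QuadraticAlgebra.lift (A := F)
    ⟨u, by simp only [neg_smul, one_smul]; linear_combination hu⟩).toRingHom⟩

/-- The square root `1 + 2ω` of `-3`. -/
def sqrtNegThree : EisensteinInt := ⟨1, 2⟩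

theorem sqrtNegThree_sq : sqrtNegThree ^ 2 = -3 := by
  rw [sq]; ext <;> simp [sqrtNegThree]

theorem sub_star_eq (z : EisensteinInt) : z - star z = z.im * sqrtNegThree := by
  ext <;> simp [sqrtNegThree, mul_two]

theorem two_mul_eq (z : EisensteinInt) : 2 * z = z.trace + z.im * sqrtNegThree := by
  ext <;> simp [sqrtNegThree, trace_def, mul_comm]

end EisensteinInt

section GaussSum

variable {F R : Type*} [Field F] [Fintype F] [CommRing R]

theorem gaussSum_pow_three [IsDomain R] {χ : MulChar F R} (hχ : orderOf χ = 3)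
    {ψ : AddChar F R} (hψ : ψ.IsPrimitive) :
    gaussSum χ ψ ^ 3 = Fintype.card F * jacobiSum χ χ := by
  have hneg : χ (-1) = 1 :=
    MulChar.val_neg_one_eq_one_of_odd_order (by decide : Odd 3) (hχ ▸ pow_orderOf_eq_one χ)
  have h := gaussSum_pow_eq_prod_jacobiSum (by omega : 2 ≤ orderOf χ) hψ
  simpa [hχ, hneg] using h

theorem map_pow_mul_gaussSum_pow_char_pow (q n : ℕ) [Fact q.Prime] [CharP R q]
    (hq : (q : F) ≠ 0) {χ : MulChar F R} (hχ : χ ^ q ^ n = χ) (ψ : AddChar F R) :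
    χ (q ^ n) * gaussSum χ ψ ^ q ^ n = gaussSum χ ψ := by
  have hfrob : gaussSum χ ψ ^ q ^ n = gaussSum (χ ^ q ^ n) (ψ ^ q ^ n) := by
    clear hχ
    induction n with
    | zero => simp
    | succ n ih => rw [pow_succ, pow_mul, ih, gaussSum_frob q, ← pow_mul, ← pow_mul]
  rw [hfrob, hχ, AddChar.pow_mulShift, Nat.cast_pow]
  exact gaussSum_mulShift χ ψ (Units.mk0 ((q : F) ^ n) (pow_ne_zero n hq))

theorem card_mul_jacobiSum_self_pow [IsDomain R] {q M : ℕ} [Fact q.Prime] [CharP R q]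
    (hq : (q : F) ≠ 0) (hM : 3 * M + 1 = q ^ 2) {χ : MulChar F R} (hχ : orderOf χ = 3)
    {ψ : AddChar F R} (hψ : ψ.IsPrimitive) (hF : (Fintype.card F : R) ≠ 0) :
    (Fintype.card F * jacobiSum χ χ) ^ M = χ q := by
  have hχ3 : χ ^ 3 = 1 := hχ ▸ pow_orderOf_eq_one χ
  have hχ1 : χ ≠ 1 := fun h => by simp [h] at hχ
  have hχq : χ q ^ 3 = 1 := by
    rw [← MulChar.pow_apply' _ three_ne_zero, hχ3, MulChar.one_apply hq.isUnit]
  have hfrob : χ (q ^ 2) * gaussSum χ ψ ^ q ^ 2 = gaussSum χ ψ :=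
    map_pow_mul_gaussSum_pow_char_pow q 2 hq (by rw [← hM, pow_succ, pow_mul, hχ3]; simp) ψ
  have hM' : χ q ^ 2 * (gaussSum χ ψ ^ 3) ^ M = 1 := by
    apply mul_right_cancel₀ (gaussSum_ne_zero_of_nontrivial hF hχ1 hψ)
    rw [← map_pow, ← pow_mul, mul_assoc, ← pow_succ, hM, hfrob, one_mul]
  rw [← gaussSum_pow_three hχ hψ]
  linear_combination χ q * hM' - (gaussSum χ ψ ^ 3) ^ M * hχq

end GaussSum

section JacobiSum

theorem ringHomComp_star_eq_inv {R : Type*} [CommMonoid R] {χ : MulChar R EisensteinInt}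
    (hχ : orderOf χ = 3) : χ.ringHomComp (starRingEnd EisensteinInt) = χ⁻¹ := by
  have hχ3 : χ ^ 3 = 1 := hχ ▸ pow_orderOf_eq_one χ
  rw [← eq_inv_of_mul_eq_one_left (by rw [← pow_succ, hχ3] : χ ^ 2 * χ = 1)]
  refine MulChar.ext fun x => ?_
  rw [MulChar.pow_apply_coe]
  exact EisensteinInt.star_eq_sq_of_pow_three_eq_one
    (by rw [← MulChar.pow_apply_coe, hχ3, MulChar.one_apply_coe])

variable {F : Type*} [Field F] [Fintype F] {χ : MulChar F EisensteinInt}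

theorem norm_jacobiSum_self (hχ : orderOf χ = 3) : (jacobiSum χ χ).norm = Fintype.card F := by
  have hχ3 : χ ^ 3 = 1 := hχ ▸ pow_orderOf_eq_one χ
  have hχ1 : χ ≠ 1 := fun h => by simp [h] at hχ
  let ι := algebraMap EisensteinInt (FractionRing EisensteinInt)
  have hι : Function.Injective ι := IsFractionRing.injective _ _
  have hcomp {φ : MulChar F EisensteinInt} (hφ : φ ≠ 1) : φ.ringHomComp ι ≠ 1 :=
    (MulChar.ringHomComp_ne_one_iff hι).2 hφ
  have : CharZero (FractionRing EisensteinInt) := charZero_of_injective_algebraMap hι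
  have hchar : ringChar (FractionRing EisensteinInt) ≠ ringChar F := by
    rw [ringChar.eq_zero]; exact (CharP.ringChar_ne_zero_of_finite F).symm
  have hχχ : χ * χ ≠ 1 := fun h => hχ1 (by rw [← hχ3, pow_succ, sq, h, one_mul])
  have h := jacobiSum_mul_jacobiSum_inv hchar (hcomp hχ1) (hcomp hχ1)
    (by rw [← MulChar.ringHomComp_mul]; exact hcomp hχχ)
  rw [MulChar.ringHomComp_inv, ← ringHomComp_star_eq_inv hχ, jacobiSum_ringHomComp,
    jacobiSum_ringHomComp, jacobiSum_ringHomComp, ← map_mul, ← map_natCast ι] at h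
  have hnorm := hι h
  rw [starRingEnd_apply, ← algebraMap_norm_eq_mul_star, ← map_natCast (algebraMap ℤ _)] at hnorm
  exact algebraMap_injective hnorm

theorem three_dvd_im_jacobiSum_self (hχ : orderOf χ = 3) : 3 ∣ (jacobiSum χ χ).im := by
  have hχ3 : χ ^ 3 = 1 := hχ ▸ pow_orderOf_eq_one χ
  have hcard : 3 ∣ Fintype.card F - 1 := hχ ▸ MulChar.orderOf_dvd_card_sub_one F χ
  obtain ⟨z, -, hz⟩ := exists_jacobiSum_eq_neg_one_add (n := 3) (by norm_num) hχ3 hχ3 hcard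
    EisensteinInt.isPrimitiveRoot_omega
  have hsq : (ω - 1 : EisensteinInt) ^ 2 = ((3 : ℤ) : EisensteinInt) * -ω := by
    push_cast; linear_combination EisensteinInt.omega_sq_add_omega_add_one
  exact ⟨(z * -ω).im, by
    rw [hz, hsq, mul_left_comm, ← zsmul_eq_mul, im_add, im_neg, im_one, im_smul, neg_zero,
      zero_add, smul_eq_mul]⟩

theorem orderOf_ringHomComp_eq_three {R K : Type*} [CommMonoid R] [CommRing K]
    (h3 : (3 : K) ≠ 0) {χ : MulChar R EisensteinInt} (hχ : orderOf χ = 3)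
    (f : EisensteinInt →+* K) : orderOf (χ.ringHomComp f) = 3 := by
  have hχ3 : χ ^ 3 = 1 := hχ ▸ pow_orderOf_eq_one χ
  refine orderOf_eq_prime (by rw [MulChar.ringHomComp_pow, hχ3, MulChar.ringHomComp_one]) ?_
  intro hφ
  have hχ1 : χ = 1 := MulChar.ext fun x => by
    rw [MulChar.one_apply_coe]
    refine EisensteinInt.eq_one_of_map_eq_one h3 f ?_ ?_
    · rw [← MulChar.pow_apply_coe, hχ3, MulChar.one_apply_coe]
    · rw [← MulChar.ringHomComp_apply, hφ, MulChar.one_apply_coe]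
  simp [hχ1] at hχ

theorem card_mul_map_jacobiSum_self_pow {l : ℕ} [Fact l.Prime]
    {χ : MulChar (ZMod l) EisensteinInt} (hχ : orderOf χ = 3)
    {q M : ℕ} [Fact q.Prime] (hq3 : q ≠ 3) (hql : q ≠ l) (hM : 3 * M + 1 = q ^ 2)
    {K : Type*} [Field K] [IsAlgClosed K] [CharP K q] (f : EisensteinInt →+* K) :
    (l * f (jacobiSum χ χ)) ^ M = f (χ q) := by
  have hlK : (l : K) ≠ 0 := CharP.cast_ne_zero_of_ne_of_prime K Fact.out hql
  have : NeZero (l : K) := ⟨hlK⟩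
  obtain ⟨ζ, hζ⟩ := HasEnoughRootsOfUnity.exists_primitiveRoot K l
  have hqZ : (q : ZMod l) ≠ 0 := CharP.cast_ne_zero_of_ne_of_prime _ Fact.out hql.symm
  have h3K : (3 : K) ≠ 0 := mod_cast CharP.cast_ne_zero_of_ne_of_prime K Nat.prime_three hq3
  have h := card_mul_jacobiSum_self_pow hqZ hM (orderOf_ringHomComp_eq_three h3K hχ f)
    (AddChar.zmodChar_primitive_of_primitive_root l hζ) (by rwa [ZMod.card])
  rwa [ZMod.card, jacobiSum_ringHomComp, MulChar.ringHomComp_apply] at h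

end JacobiSum

/-- `χ` is a cubic residue symbol attached to the Eisenstein integer `θ`: it is periodic modulo
the norm of `θ`, takes cube roots of unity as values, and satisfies the reciprocity law
`χ q = (star θ / θ) ^ ((q ^ 2 - 1) / 3)` in characteristic `q`. The exponent `(q ^ 2 - 1) / 3`,
instead of `(q - 1) / 3`, makes the law uniform in the residue of `q` modulo `3`. -/
structure IsCubicSymbol (θ : EisensteinInt) (χ : ℤ →* EisensteinInt) : Prop where
  apply_eq_of_dvd_sub : ∀ {m n : ℤ}, θ.norm ∣ m - n → χ m = χ n
  pow_three : ∀ {n : ℤ}, IsCoprime n θ.norm → χ n ^ 3 = 1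
  reciprocity : ∀ {q M : ℕ} [Fact q.Prime], q ≠ 3 → IsCoprime (q : ℤ) θ.norm →
    3 * M + 1 = q ^ 2 → ∀ f : EisensteinInt →+* AlgebraicClosure (ZMod q),
      f (χ q) * f θ ^ M = f (star θ) ^ M

namespace IsCubicSymbol

variable {θ η : EisensteinInt} {χ φ : ℤ →* EisensteinInt}

protected theorem intCast (n : ℤ) : IsCubicSymbol (n : EisensteinInt) 1 where
  apply_eq_of_dvd_sub _ := rfl
  pow_three _ := one_pow _
  reciprocity _ _ _ f := by simp

protected theorem mul (hθ : IsCubicSymbol θ χ) (hη : IsCubicSymbol η φ) :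
    IsCubicSymbol (θ * η) (χ * φ) where
  apply_eq_of_dvd_sub h := by
    rw [map_mul] at h
    rw [MonoidHom.mul_apply, MonoidHom.mul_apply,
      hθ.apply_eq_of_dvd_sub ((dvd_mul_right _ _).trans h),
      hη.apply_eq_of_dvd_sub ((dvd_mul_left _ _).trans h)]
  pow_three h := by
    rw [map_mul] at h
    rw [MonoidHom.mul_apply, mul_pow, hθ.pow_three h.of_mul_right_left,
      hη.pow_three h.of_mul_right_right, mul_one]
  reciprocity hq3 h hM f := by
    rw [map_mul] at h
    rw [MonoidHom.mul_apply, star_mul', map_mul, map_mul, map_mul, mul_pow, mul_pow,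
      ← hθ.reciprocity hq3 h.of_mul_right_left hM f,
      ← hη.reciprocity hq3 h.of_mul_right_right hM f]
    ring

protected theorem star (hθ : IsCubicSymbol θ χ) :
    IsCubicSymbol (star θ) ((starRingEnd EisensteinInt : EisensteinInt →* _).comp χ) where
  apply_eq_of_dvd_sub h := by
    rw [QuadraticAlgebra.norm_star] at h
    rw [MonoidHom.comp_apply, hθ.apply_eq_of_dvd_sub h, MonoidHom.comp_apply]
  pow_three h := by
    rw [QuadraticAlgebra.norm_star] at h
    rw [MonoidHom.comp_apply, ← map_pow, hθ.pow_three h, map_one]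
  reciprocity hq3 h hM f := by
    rw [QuadraticAlgebra.norm_star] at h
    exact hθ.reciprocity hq3 h hM (f.comp (starRingEnd EisensteinInt))

protected theorem jacobiSum {l : ℕ} [Fact l.Prime] {χ : MulChar (ZMod l) EisensteinInt}
    (hχ : orderOf χ = 3) :
    IsCubicSymbol (jacobiSum χ χ) (χ.toMonoidHom.comp (Int.castRingHom (ZMod l))) where
  apply_eq_of_dvd_sub {m n} h := by
    rw [norm_jacobiSum_self hχ, ZMod.card] at h
    have hmn : (m : ZMod l) = n :=
      (ZMod.intCast_eq_intCast_iff_dvd_sub m n l).2 (dvd_sub_comm.1 h)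
    exact congrArg χ hmn
  pow_three {n} h := by
    rw [norm_jacobiSum_self hχ, ZMod.card] at h
    change χ n ^ 3 = 1
    rw [← MulChar.pow_apply' _ three_ne_zero, ← hχ, pow_orderOf_eq_one]
    exact MulChar.one_apply ((ZMod.coe_int_isUnit_iff_isCoprime n l).2 h.symm)
  reciprocity {q M} _ hq3 h hM f := by
    rw [norm_jacobiSum_self hχ, ZMod.card, Nat.isCoprime_iff_coprime,
      Nat.coprime_primes Fact.out Fact.out] at h
    set J := jacobiSum χ χ
    have hl : (l : AlgebraicClosure (ZMod q)) ≠ 0 :=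
      CharP.cast_ne_zero_of_ne_of_prime _ Fact.out h
    have hq : (q : ZMod l) ≠ 0 := CharP.cast_ne_zero_of_ne_of_prime _ Fact.out h.symm
    have hχq : χ q ^ 3 = 1 := by
      rw [← MulChar.pow_apply' _ three_ne_zero, ← hχ, pow_orderOf_eq_one]
      exact MulChar.one_apply hq.isUnit
    have hf : (l * f J) ^ M = f (χ q) := card_mul_map_jacobiSum_self_pow hχ hq3 h hM f
    have hfstar : (l * f (star J)) ^ M = f (χ q) ^ 2 := by
      have h := card_mul_map_jacobiSum_self_pow hχ hq3 h hM (f.comp (starRingEnd EisensteinInt))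
      simpa only [RingHom.comp_apply, starRingEnd_apply,
        EisensteinInt.star_eq_sq_of_pow_three_eq_one hχq, map_pow] using h
    have hgoal : f (χ q) * f J ^ M = f (star J) ^ M := by
      apply mul_left_cancel₀ (pow_ne_zero M hl)
      rw [mul_left_comm, ← mul_pow, hf, ← mul_pow, hfstar, sq]
    simpa using hgoal

end IsCubicSymbol

/-- An Eisenstein integer is primary if it is congruent to `±1` modulo `3`. -/
def IsPrimary (z : EisensteinInt) : Prop := 3 ∣ z.im ∧ ¬ 3 ∣ z.re

namespace IsPrimary

variable {z w : EisensteinInt}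

theorem not_three_dvd_norm (hz : IsPrimary z) : ¬ 3 ∣ z.norm := by
  obtain ⟨⟨b, hb⟩, hre⟩ := hz
  rw [EisensteinInt.norm_eq, hb]
  intro h
  refine hre (Int.prime_three.dvd_of_dvd_pow (n := 2) ?_)
  convert dvd_add h (dvd_mul_right 3 (z.re * b - 3 * b ^ 2)) using 1
  ring

theorem of_not_three_dvd_norm (him : 3 ∣ z.im) (hz : ¬ 3 ∣ z.norm) : IsPrimary z :=
  ⟨him, fun hre => hz <| by
    rw [EisensteinInt.norm_eq]
    exact dvd_add (dvd_sub (dvd_pow hre two_ne_zero) (hre.mul_right _)) (dvd_pow him two_ne_zero)⟩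

protected theorem star (hz : IsPrimary z) : IsPrimary (star z) :=
  of_not_three_dvd_norm (by simpa using hz.1)
    (by rw [QuadraticAlgebra.norm_star]; exact hz.not_three_dvd_norm)

theorem of_mul_left (hz : IsPrimary z) (hzw : IsPrimary (z * w)) : IsPrimary w := by
  have hnorm := hzw.not_three_dvd_norm
  rw [map_mul] at hnorm
  refine of_not_three_dvd_norm ?_ fun h => hnorm (h.mul_left _)
  have h : (3 : ℤ) ∣ z.re * w.im := by
    rw [show z.re * w.im = (z * w).im - z.im * (w.re - w.im) by rw [im_mul]; ring]
    exact dvd_sub hzw.1 (hz.1.mul_right _)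
  exact (Int.prime_three.dvd_or_dvd h).resolve_left hz.2

end IsPrimary

namespace EisensteinInt

variable {q : ℕ} [Fact q.Prime] {z : EisensteinInt}

theorem natCast_dvd_of_dvd_norm_of_dvd_im (hnorm : (q : ℤ) ∣ z.norm) (him : (q : ℤ) ∣ z.im) :
    (q : EisensteinInt) ∣ z := by
  have hq : Prime (q : ℤ) := Nat.prime_iff_prime_int.1 Fact.out
  have hre : (q : ℤ) ∣ z.re ^ 2 := by
    rw [show z.re ^ 2 = z.norm + z.im * (z.re - z.im) by rw [norm_eq]; ring]
    exact dvd_add hnorm (him.mul_right _)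
  rw [← map_natCast (algebraMap ℤ EisensteinInt)]
  exact algebraMap_dvd_iff.2 ⟨hq.dvd_of_dvd_pow hre, him⟩

theorem natCast_dvd_of_dvd_norm (hq3 : q ≠ 3) (hq1 : q % 3 ≠ 1) (hnorm : (q : ℤ) ∣ z.norm) :
    (q : EisensteinInt) ∣ z := by
  refine natCast_dvd_of_dvd_norm_of_dvd_im hnorm ?_
  by_contra him
  have hq : q.Prime := Fact.out
  have him' : (z.im : ZMod q) ≠ 0 := by rwa [Ne, ZMod.intCast_zmod_eq_zero_iff_dvd]
  have hnorm' : (z.re : ZMod q) ^ 2 - z.re * z.im + (z.im : ZMod q) ^ 2 = 0 := by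
    rw [← ZMod.intCast_zmod_eq_zero_iff_dvd, norm_eq] at hnorm
    exact mod_cast hnorm
  have h3 : (3 : ZMod q) ≠ 0 :=
    mod_cast CharP.cast_ne_zero_of_ne_of_prime (ZMod q) Nat.prime_three hq3
  let w : ZMod q := -z.re / z.im
  have hw : w ^ 2 + w + 1 = 0 := by
    simp only [w]; field_simp; linear_combination hnorm'
  have hw1 : w ≠ 1 := fun h => h3 (by rw [h] at hw; linear_combination hw)
  have hw0 : w ≠ 0 := fun h => by simp [h] at hw
  have hdvd : 3 ∣ q - 1 := by
    rw [← orderOf_eq_prime (by linear_combination (w - 1) * hw : w ^ 3 = 1) hw1]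
    exact orderOf_dvd_of_pow_eq_one (ZMod.pow_card_sub_one_eq_one hw0)
  have := hq.two_le
  omega

theorem dvd_or_star_dvd_of_dvd_norm {π : EisensteinInt} (hπ : π.norm = q)
    (hnorm : (q : ℤ) ∣ z.norm) : π ∣ z ∨ star π ∣ z := by
  have hq : Prime (q : ℤ) := Nat.prime_iff_prime_int.1 Fact.out
  have hππ : π * star π = (q : EisensteinInt) := by
    rw [← algebraMap_norm_eq_mul_star, hπ, map_natCast]
  have hπ0 : π * star π ≠ 0 := by
    rw [hππ]; exact mod_cast (Nat.Prime.ne_zero Fact.out : q ≠ 0)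
  have of_dvd_im {ρ : EisensteinInt} (h : (q : ℤ) ∣ (z * ρ).im) : π * star π ∣ z * ρ := by
    rw [hππ]
    exact natCast_dvd_of_dvd_norm_of_dvd_im (by rw [map_mul]; exact hnorm.mul_right _) h
  have hprod : (q : ℤ) ∣ (z * π).im * (z * star π).im := by
    have h : (z * π).im * (z * star π).im = z.im ^ 2 * π.norm - π.im ^ 2 * z.norm := by
      simp only [im_mul, re_star, im_star, norm_eq]; ring
    rw [h, hπ]
    exact dvd_sub (dvd_mul_left _ _) (hnorm.mul_left _)
  rcases hq.dvd_or_dvd hprod with h | h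
  · have := of_dvd_im h
    rw [mul_comm] at this
    exact .inr ((mul_dvd_mul_iff_right (left_ne_zero_of_mul hπ0)).1 this)
  · exact .inl ((mul_dvd_mul_iff_right (right_ne_zero_of_mul hπ0)).1 (of_dvd_im h))

end EisensteinInt

theorem IsPrimary.exists_dvd {θ : EisensteinInt} (hθ : IsPrimary θ) (hθ1 : θ.norm ≠ 1) :
    ∃ π χ, π ∣ θ ∧ IsPrimary π ∧ 1 < π.norm ∧ IsCubicSymbol π χ := by
  have hnat : (θ.norm.natAbs : ℤ) = θ.norm := Int.natAbs_of_nonneg θ.norm_nonneg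
  obtain ⟨q, hq, hqθ⟩ := Nat.exists_prime_and_dvd (by omega : θ.norm.natAbs ≠ 1)
  have : Fact q.Prime := ⟨hq⟩
  have hqθ : (q : ℤ) ∣ θ.norm := Int.natCast_dvd.2 hqθ
  have hq3 : q ≠ 3 := by rintro rfl; exact hθ.not_three_dvd_norm hqθ
  have hq3' : ¬ 3 ∣ q := mt (hq.dvd_iff_eq (by decide)).1 hq3
  by_cases hq1 : q % 3 = 1
  · obtain ⟨χ, hχ⟩ := MulChar.exists_mulChar_orderOf (ZMod q) (n := 3)
      (by rw [ZMod.card]; omega) EisensteinInt.isPrimitiveRoot_omega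
    have hJ : (jacobiSum χ χ).norm = q := by rw [norm_jacobiSum_self hχ, ZMod.card]
    have hJprim : IsPrimary (jacobiSum χ χ) :=
      .of_not_three_dvd_norm (three_dvd_im_jacobiSum_self hχ) (by rw [hJ]; exact mod_cast hq3')
    have hJ1 : 1 < (jacobiSum χ χ).norm := by have := hq.one_lt; omega
    have hsymb := IsCubicSymbol.jacobiSum hχ
    rcases EisensteinInt.dvd_or_star_dvd_of_dvd_norm hJ hqθ with h | h
    · exact ⟨_, _, h, hJprim, hJ1, hsymb⟩
    · exact ⟨_, _, h, hJprim.star, by rwa [QuadraticAlgebra.norm_star], hsymb.star⟩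
  · refine ⟨((q : ℤ) : EisensteinInt), 1, ?_, ⟨by simp, by simpa using mod_cast hq3'⟩, ?_,
      .intCast q⟩
    · exact mod_cast EisensteinInt.natCast_dvd_of_dvd_norm hq3 hq1 hqθ
    · rw [norm_intCast, Int.cast_id]; exact one_lt_pow₀ (mod_cast hq.one_lt) two_ne_zero

theorem IsPrimary.exists_isCubicSymbol {θ : EisensteinInt} (hθ : IsPrimary θ) :
    ∃ χ, IsCubicSymbol θ χ := by
  induction h : θ.norm.natAbs using Nat.strong_induction_on generalizing θ with
  | _ n ih =>
  by_cases hθ1 : θ.norm = 1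
  · have him : θ.im = 0 := by
      obtain ⟨b, hb⟩ := hθ.1
      rw [EisensteinInt.norm_eq, hb] at hθ1
      have hb0 : b = 0 := by nlinarith [sq_nonneg (2 * θ.re - 3 * b)]
      rw [hb, hb0, mul_zero]
    rw [show θ = (θ.re : EisensteinInt) by ext <;> simp [him]]
    exact ⟨1, .intCast _⟩
  · obtain ⟨π, χ, ⟨η, rfl⟩, hπ, hπ1, hχ⟩ := hθ.exists_dvd hθ1
    have hη := hπ.of_mul_left hθ
    have hη0 : η.norm.natAbs ≠ 0 := fun h0 =>
      hη.not_three_dvd_norm (by rw [Int.natAbs_eq_zero.1 h0]; exact dvd_zero 3)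
    have hlt : η.norm.natAbs < n := by
      rw [← h, map_mul, Int.natAbs_mul]
      exact lt_mul_of_one_lt_left (by omega) (by omega)
    obtain ⟨φ, hφ⟩ := ih _ hlt hη rfl
    exact ⟨_, hχ.mul hφ⟩

theorem exists_three_mul_add_one_eq_sq {q : ℕ} (hq : ¬ 3 ∣ q) : ∃ M, 3 * M + 1 = q ^ 2 := by
  have hmod : q ^ 2 % 3 = 1 := by
    rcases (by omega : q % 3 = 1 ∨ q % 3 = 2) with h | h <;> rw [Nat.pow_mod, h]
  exact ⟨q ^ 2 / 3, by omega⟩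

theorem neg_pow_of_three_mul_add_one_eq_sq {q M : ℕ} [Fact q.Prime] (hM : 3 * M + 1 = q ^ 2)
    {R : Type*} [CommRing R] [CharP R q] (x : R) : (-x) ^ M = x ^ M := by
  rcases (Fact.out : q.Prime).eq_two_or_odd' with rfl | hq
  · rw [CharTwo.neg_eq]
  · have hodd : Odd (3 * M + 1) := hM ▸ hq.pow
    exact Even.neg_pow (by grind) x

namespace IsCubicSymbol

variable {θ : EisensteinInt} {χ : ℤ →* EisensteinInt}

section Prime

variable {q M : ℕ} [Fact q.Prime]

theorem apply_prime_eq_one_iff (hχ : IsCubicSymbol θ χ) (hq3 : q ≠ 3)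
    (hq : IsCoprime (q : ℤ) θ.norm) (hM : 3 * M + 1 = q ^ 2)
    (f : EisensteinInt →+* AlgebraicClosure (ZMod q)) :
    χ q = 1 ↔ f θ ^ M = f (star θ) ^ M := by
  have hnorm : (θ.norm : AlgebraicClosure (ZMod q)) ≠ 0 := by
    rw [Ne, CharP.intCast_eq_zero_iff _ q]
    exact fun h => (Nat.prime_iff_prime_int.1 Fact.out).not_isUnit (hq.isUnit_of_dvd' dvd_rfl h)
  have hθ : f θ ≠ 0 := fun h => hnorm <| by
    rw [← map_intCast f, ← eq_intCast (algebraMap ℤ EisensteinInt), algebraMap_norm_eq_mul_star,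
      map_mul, h, zero_mul]
  have h3 : (3 : AlgebraicClosure (ZMod q)) ≠ 0 :=
    mod_cast CharP.cast_ne_zero_of_ne_of_prime _ Nat.prime_three hq3
  calc χ q = 1 ↔ f (χ q) = 1 :=
        ⟨fun h => by rw [h, map_one], EisensteinInt.eq_one_of_map_eq_one h3 f (hχ.pow_three hq)⟩
    _ ↔ f θ ^ M = f (star θ) ^ M := by
        rw [← hχ.reciprocity hq3 hq hM f, eq_comm (a := f θ ^ M),
          mul_eq_right₀ (pow_ne_zero M hθ)]

theorem apply_prime_eq_one_of_dvd_trace (hχ : IsCubicSymbol θ χ) (hq3 : q ≠ 3)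
    (hq : IsCoprime (q : ℤ) θ.norm) (htrace : (q : ℤ) ∣ θ.trace) : χ q = 1 := by
  have hq3' : ¬ 3 ∣ q := mt (Nat.Prime.dvd_iff_eq Fact.out (by decide)).1 hq3
  obtain ⟨M, hM⟩ := exists_three_mul_add_one_eq_sq hq3'
  obtain ⟨f⟩ := EisensteinInt.nonempty_ringHom (AlgebraicClosure (ZMod q))
  have hsum : f θ + f (star θ) = 0 := by
    rw [← map_add, ← algebraMap_trace_eq_add_star, eq_intCast, map_intCast,
      CharP.intCast_eq_zero_iff _ q]
    exact htrace
  rw [hχ.apply_prime_eq_one_iff hq3 hq hM f, eq_neg_of_add_eq_zero_left hsum,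
    neg_pow_of_three_mul_add_one_eq_sq hM]

end Prime

theorem apply_neg_one (hχ : IsCubicSymbol θ χ) : χ (-1) = 1 := by
  have h3 : χ (-1) ^ 3 = 1 := hχ.pow_three isCoprime_one_left.neg_left
  rwa [← map_pow, (by decide : Odd 3).neg_one_pow] at h3

theorem apply_eq_one_of_dvd_trace (hχ : IsCubicSymbol θ χ) {n : ℤ} (hn3 : ¬ 3 ∣ n)
    (hn : IsCoprime n θ.norm) (htrace : n ∣ θ.trace) : χ n = 1 := by
  have hnat (m : ℕ) (hm3 : ¬ 3 ∣ m) (hm : IsCoprime (m : ℤ) θ.norm)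
      (hmtrace : (m : ℤ) ∣ θ.trace) : χ m = 1 := by
    induction m using induction_on_primes with
    | zero => exact absurd (dvd_zero 3) hm3
    | one => simp
    | prime_mul q m hq ih =>
      have : Fact q.Prime := ⟨hq⟩
      push_cast at hm hmtrace ⊢
      rw [map_mul, ih (fun h => hm3 (h.mul_left q)) hm.of_mul_left_right
        ((dvd_mul_left _ _).trans hmtrace), mul_one]
      refine hχ.apply_prime_eq_one_of_dvd_trace ?_ hm.of_mul_left_left
        ((dvd_mul_right _ _).trans hmtrace)
      rintro rfl
      exact hm3 (dvd_mul_right 3 m)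
  rcases n.eq_nat_or_neg with ⟨m, rfl | rfl⟩
  · exact hnat m (mod_cast hn3) hn htrace
  · rw [← neg_one_mul (m : ℤ), map_mul, hχ.apply_neg_one, one_mul]
    rw [dvd_neg] at hn3
    exact hnat m (mod_cast hn3) ((IsCoprime.neg_left_iff _ _).1 hn) (by simpa using htrace)

theorem apply_eq_one_of_norm_dvd (hχ : IsCubicSymbol θ χ) (h3 : IsCoprime 3 θ.norm) {k m : ℤ}
    (hm : χ m = 1) (hkm : θ.norm ∣ 27 * k - m) : χ k = 1 := by
  rwa [← hχ.apply_eq_of_dvd_sub hkm, map_mul, show (27 : ℤ) = 3 ^ 3 by norm_num, map_pow,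
    hχ.pow_three h3, one_mul] at hm

theorem apply_two_ne_one (hχ : IsCubicSymbol θ χ) (him : Odd θ.im) : χ 2 ≠ 1 := by
  have hnorm : IsCoprime ((2 : ℕ) : ℤ) θ.norm := by
    rw [Nat.cast_ofNat, Int.isCoprime_two_left, EisensteinInt.norm_eq,
      show θ.re ^ 2 - θ.re * θ.im + θ.im ^ 2 = θ.im ^ 2 + θ.re * (θ.re - θ.im) by ring]
    refine him.pow.add_even ?_
    rcases Int.even_or_odd θ.re with hre | hre
    exacts [hre.mul_right _, (hre.sub_odd him).mul_left _]
  obtain ⟨f⟩ := EisensteinInt.nonempty_ringHom (AlgebraicClosure (ZMod 2))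
  intro hχ2
  have hstar : f θ = f (star θ) := by
    simpa using (hχ.apply_prime_eq_one_iff (M := 1) (by decide) hnorm (by decide) f).1 hχ2
  have him' : ((θ.im : ℤ) : AlgebraicClosure (ZMod 2)) = 1 := by
    obtain ⟨k, hk⟩ := him
    rw [hk, Int.cast_add, Int.cast_mul, Int.cast_ofNat,
      CharTwo.two_eq_zero (R := AlgebraicClosure (ZMod 2)), zero_mul, zero_add, Int.cast_one]
  have hsqrt : f EisensteinInt.sqrtNegThree = 0 := by
    rw [← sub_eq_zero, ← map_sub, EisensteinInt.sub_star_eq, map_mul, map_intCast, him',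
      one_mul] at hstar
    exact hstar
  have h3 : (-3 : AlgebraicClosure (ZMod 2)) = 0 := by
    rw [← map_ofNat f 3, ← map_neg, ← EisensteinInt.sqrtNegThree_sq, map_pow, hsqrt]; simp
  exact neg_ne_zero.2 (mod_cast CharP.cast_ne_zero_of_ne_of_prime _ Nat.prime_three
    (by decide : 2 ≠ 3)) h3

end IsCubicSymbol

section Cardano

variable {F : Type*} [Field F] {p : ℕ} [Fact p.Prime] [CharP F p]

theorem pow_char_eq_self_iff {x : F} :
    x ^ p = x ↔ ∃ n : ZMod p, ZMod.castHom dvd_rfl F n = x := by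
  rw [← Subfield.mem_bot_iff_pow_eq_self F p, ← ZMod.fieldRange_castHom_eq_bot p]
  rfl

theorem exists_zmod_root_iff :
    (∃ x : ZMod p, x ^ 3 - x - 1 = 0) ↔ ∃ x : F, x ^ p = x ∧ x ^ 3 - x - 1 = 0 := by
  have hroot (n : ZMod p) : n ^ 3 - n - 1 = 0 ↔
      ZMod.castHom dvd_rfl F n ^ 3 - ZMod.castHom dvd_rfl F n - 1 = 0 := by
    rw [← map_pow, ← map_sub, ← map_one (ZMod.castHom dvd_rfl F), ← map_sub,
      map_eq_zero_iff _ (ZMod.castHom_injective F)]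
  simp only [pow_char_eq_self_iff, hroot]
  exact ⟨fun ⟨n, hn⟩ => ⟨_, ⟨n, rfl⟩, hn⟩, fun ⟨_, ⟨n, rfl⟩, hn⟩ => ⟨n, hn⟩⟩

theorem pow_char_sq_eq_self_of_quadratic {b c y : F} (hb : b ^ p = b) (hc : c ^ p = c)
    (hy : y ^ 2 + b * y + c = 0) : y ^ p ^ 2 = y := by
  have hfrob : (y ^ p) ^ 2 + b * y ^ p + c = 0 := by
    simpa only [map_add, map_mul, map_pow, map_zero, frobenius_def, hb, hc] using
      congrArg (frobenius F p) hy
  have hfactor : (y ^ p - y) * (y ^ p + (y + b)) = 0 := by linear_combination hfrob - hy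
  rw [sq p, pow_mul]
  rcases mul_eq_zero.1 hfactor with h | h
  · rw [sub_eq_zero.1 h, sub_eq_zero.1 h]
  · have hyp : y ^ p = -y - b := by linear_combination h
    rw [hyp, sub_pow_char, neg_pow, neg_one_pow_char, hyp, hb]; ring

theorem exists_zmod_root_iff_pow_char_sq_eq_self {y : F} (hy : y ^ 3 - y - 1 = 0) :
    (∃ x : ZMod p, x ^ 3 - x - 1 = 0) ↔ y ^ p ^ 2 = y := by
  rw [exists_zmod_root_iff (F := F)]
  constructor
  · rintro ⟨x, hxp, hx⟩
    have hfactor : (y - x) * (y ^ 2 + x * y + (x ^ 2 - 1)) = 0 := by linear_combination hy - hx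
    rcases mul_eq_zero.1 hfactor with h | h
    · rw [sub_eq_zero.1 h, sq p, pow_mul, hxp, hxp]
    · refine pow_char_sq_eq_self_of_quadratic hxp ?_ h
      rw [sub_pow_char, one_pow, pow_right_comm, hxp]
  · intro hyp
    by_cases hyp1 : y ^ p = y
    · exact ⟨y, hyp1, hy⟩
    have hfrob : (y ^ p) ^ 3 - y ^ p - 1 = 0 := by
      simpa only [map_sub, map_pow, map_zero, map_one, frobenius_def] using
        congrArg (frobenius F p) hy
    have hquad : (y ^ p) ^ 2 + y * y ^ p + (y ^ 2 - 1) = 0 :=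
      (mul_eq_zero.1 (by linear_combination hfrob - hy :
        (y ^ p - y) * ((y ^ p) ^ 2 + y * y ^ p + (y ^ 2 - 1)) = 0)).resolve_left
        (sub_ne_zero.2 hyp1)
    refine ⟨-y - y ^ p, ?_, by linear_combination hy - (y ^ p + 2 * y) * hquad⟩
    rw [sub_pow_char, neg_pow, neg_one_pow_char, ← pow_mul, ← sq, hyp]; ring

theorem mul_add_sq_mul_eq_add_iff {a b z : F} (hab : a ^ 3 ≠ b ^ 3) (hz : z ^ 3 = 1) :
    z * a + z ^ 2 * b = a + b ↔ z = 1 := by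
  refine ⟨fun h => by_contra fun hz1 => hab ?_, by rintro rfl; ring⟩
  have hz1 := sub_ne_zero.2 hz1
  have hsum : z ^ 2 + z + 1 = 0 := mul_left_cancel₀ hz1 (by linear_combination hz)
  have hlin : a + (z + 1) * b = 0 := mul_left_cancel₀ hz1 (by linear_combination h)
  rw [show a = z ^ 2 * b by linear_combination hlin - b * hsum]
  linear_combination (z ^ 3 + 1) * b ^ 3 * hz

theorem add_pow_char_sq_eq_self_iff {M : ℕ} (hM : 3 * M + 1 = p ^ 2) {a b : F}
    (hab : a ^ 3 ≠ b ^ 3) (ha : ((a ^ 3) ^ M) ^ 3 = 1) (hb : (a ^ 3) ^ M * (b ^ 3) ^ M = 1) :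
    (a + b) ^ p ^ 2 = a + b ↔ (a ^ 3) ^ M = (b ^ 3) ^ M := by
  set z := (a ^ 3) ^ M with hz
  have hbz : (b ^ 3) ^ M = z ^ 2 := by linear_combination z ^ 2 * hb - (b ^ 3) ^ M * ha
  have hza : a ^ p ^ 2 = z * a := by rw [← hM, pow_succ, pow_mul]
  have hzb : b ^ p ^ 2 = z ^ 2 * b := by rw [← hM, pow_succ, pow_mul, hbz]
  have hz0 : z ≠ 0 := by rintro h; rw [h] at ha; norm_num at ha
  rw [add_pow_char_pow, hza, hzb, mul_add_sq_mul_eq_add_iff hab ha, hbz, sq, eq_comm,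
    left_eq_mul₀ hz0, eq_comm]

section Resolvent

variable {M : ℕ} {A B : F}

theorem pow_pow_three_eq_one_of_resolvent (hM : 3 * M + 1 = p ^ 2) (hsum : A + B = 1)
    (hprod : 27 * (A * B) = 1) : (A ^ M) ^ 3 = 1 := by
  have hA : A ≠ 0 := by rintro rfl; simp at hprod
  have h27 : (27 : F) ≠ 0 := left_ne_zero_of_mul_eq_one hprod
  have hquad : A ^ 2 + -1 * A + 27⁻¹ = 0 := by
    field_simp; linear_combination 27 * A * hsum - hprod
  have h27p : (27⁻¹ : F) ^ p = 27⁻¹ := by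
    rw [inv_pow, ← frobenius_def, map_ofNat]
  have hAp := pow_char_sq_eq_self_of_quadratic (neg_one_pow_char F p) h27p hquad
  apply mul_right_cancel₀ hA
  rw [one_mul, ← pow_mul, ← pow_succ, mul_comm, hM, hAp]

theorem exists_zmod_root_iff_resolvent_pow_eq [IsAlgClosed F] (hM : 3 * M + 1 = p ^ 2)
    (hsum : A + B = 1) (hprod : 27 * (A * B) = 1) (hAB : A ≠ B) :
    (∃ x : ZMod p, x ^ 3 - x - 1 = 0) ↔ A ^ M = B ^ M := by
  have h27 : (27 : F) ≠ 0 := left_ne_zero_of_mul_eq_one hprod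
  have h3 : (3 : F) ≠ 0 := fun h => h27 (by linear_combination 9 * h)
  obtain ⟨a, ha⟩ := IsAlgClosed.exists_pow_nat_eq A three_pos
  have ha0 : a ≠ 0 := by rintro rfl; simp [← ha] at hprod
  obtain ⟨b, hab⟩ : ∃ b, 3 * (a * b) = 1 := ⟨1 / (3 * a), by field_simp⟩
  have hb : b ^ 3 = B := by
    have hA : A ≠ 0 := ha ▸ pow_ne_zero 3 ha0
    apply mul_left_cancel₀ h27
    apply mul_left_cancel₀ hA
    rw [← ha] at hprod ⊢
    linear_combination (9 * (a * b) ^ 2 + 3 * (a * b) + 1) * hab - hprod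
  have hroot : (a + b) ^ 3 - (a + b) - 1 = 0 := by
    linear_combination (a + b) * hab + hsum + ha + hb
  have h27M : (27 : F) ^ M = 1 := by
    apply mul_right_cancel₀ h3
    rw [show (27 : F) = 3 ^ 3 by norm_num, ← pow_mul, ← pow_succ, hM, ← iterateFrobenius_def,
      map_ofNat, one_mul]
  have hABM : A ^ M * B ^ M = 1 := by
    rw [← one_pow M, ← hprod, mul_pow, mul_pow, h27M, one_mul]
  rw [exists_zmod_root_iff_pow_char_sq_eq_self hroot, add_pow_char_sq_eq_self_iff hM
    (by rwa [ha, hb]) (by rw [ha]; exact pow_pow_three_eq_one_of_resolvent hM hsum hprod)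
    (by rw [ha, hb, hABM]), ha, hb]

theorem exists_zmod_root_iff_resolvent_sq_pow_eq [IsAlgClosed F] (hM : 3 * M + 1 = p ^ 2)
    (hsum : A + B = 1) (hprod : 27 * (A * B) = 1) (hAB : A ≠ B) :
    (∃ x : ZMod p, x ^ 3 - x - 1 = 0) ↔ (A ^ 2) ^ M = (B ^ 2) ^ M := by
  have hA := pow_pow_three_eq_one_of_resolvent hM hsum hprod
  have hB := pow_pow_three_eq_one_of_resolvent hM (add_comm A B ▸ hsum) (mul_comm A B ▸ hprod)
  rw [exists_zmod_root_iff_resolvent_pow_eq hM hsum hprod hAB, pow_right_comm A, pow_right_comm B]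
  refine ⟨fun h => by rw [h], fun h => ?_⟩
  linear_combination B ^ M * hA - A ^ M * hB - A ^ M * B ^ M * h

end Resolvent

variable {X Y s : F}

theorem exists_resolvent_roots (h2 : (2 : F) ≠ 0) (h3 : (3 : F) ≠ 0) (hs : s ^ 2 = -3)
    (hXY : X ^ 2 = -23 * Y ^ 2) (hX : X ≠ 0) (hY : Y ≠ 0) :
    ∃ A B : F, A + B = 1 ∧ 27 * (A * B) = 1 ∧ A ≠ B ∧
      18 * Y * A = 9 * Y + X * s ∧ 18 * Y * B = 9 * Y - X * s := by
  have hs0 : s ≠ 0 := by rintro rfl; exact h3 (by linear_combination hs)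
  have h18 : (18 : F) ≠ 0 := by
    rw [show (18 : F) = 2 * 3 ^ 2 by norm_num]; exact mul_ne_zero h2 (pow_ne_zero 2 h3)
  refine ⟨(9 * Y + X * s) / (18 * Y), (9 * Y - X * s) / (18 * Y), ?_, ?_, ?_, ?_, ?_⟩
  · field_simp; ring
  · field_simp; linear_combination 81 * hXY - 27 * X ^ 2 * hs
  · intro h
    field_simp at h
    exact mul_ne_zero h2 (mul_ne_zero hX hs0) (by linear_combination h)
  · field_simp
  · field_simp

variable [IsAlgClosed F] {M : ℕ}

theorem exists_zmod_root_iff_sub_three_mul_pow_eq (hM : 3 * M + 1 = p ^ 2) (h2 : (2 : F) ≠ 0)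
    (h3 : (3 : F) ≠ 0) (hs : s ^ 2 = -3) (hXY : X ^ 2 = -23 * Y ^ 2) (hX : X ≠ 0) (hY : Y ≠ 0) :
    (∃ x : ZMod p, x ^ 3 - x - 1 = 0) ↔ (X + -3 * Y * s) ^ M = (X - -3 * Y * s) ^ M := by
  obtain ⟨A, B, hsum, hprod, hAB, hA, hB⟩ := exists_resolvent_roots h2 h3 hs hXY hX hY
  have hs0 : s ≠ 0 := by rintro rfl; exact h3 (by linear_combination hs)
  have h6 : 6 * Y * s ≠ 0 := by
    rw [show (6 : F) = 2 * 3 by norm_num]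
    exact mul_ne_zero (mul_ne_zero (mul_ne_zero h2 h3) hY) hs0
  have hA' : X + -3 * Y * s = (-(6 * Y * s)) * A :=
    mul_left_cancel₀ h3 (by linear_combination s * hA + X * hs)
  have hB' : X - -3 * Y * s = 6 * Y * s * B :=
    mul_left_cancel₀ h3 (by linear_combination X * hs - s * hB)
  rw [exists_zmod_root_iff_resolvent_pow_eq hM hsum hprod hAB, hA', hB', mul_pow, mul_pow,
    neg_pow_of_three_mul_add_one_eq_sq hM, mul_right_inj' (pow_ne_zero M h6)]

theorem exists_zmod_root_iff_twentyFive_mul_add_pow_eq (hM : 3 * M + 1 = p ^ 2)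
    (h2 : (2 : F) ≠ 0) (h3 : (3 : F) ≠ 0) (hs : s ^ 2 = -3) (hXY : X ^ 2 = -23 * Y ^ 2)
    (hX : X ≠ 0) (hY : Y ≠ 0) :
    (∃ x : ZMod p, x ^ 3 - x - 1 = 0) ↔
      (25 * Y + 3 * X * s) ^ M = (25 * Y - 3 * X * s) ^ M := by
  obtain ⟨A, B, hsum, hprod, hAB, hA, hB⟩ := exists_resolvent_roots h2 h3 hs hXY hX hY
  have h6 : 6 * Y ≠ 0 := by
    rw [show (6 : F) = 2 * 3 by norm_num]
    exact mul_ne_zero (mul_ne_zero h2 h3) hY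
  have h54 : 54 * Y ≠ 0 := by
    rw [show 54 * Y = 3 ^ 2 * (6 * Y) by ring]; exact mul_ne_zero (pow_ne_zero 2 h3) h6
  have hA' : 25 * Y + 3 * X * s = 54 * Y * A ^ 2 := mul_left_cancel₀ h6 <| by
    linear_combination 3 * hXY - X ^ 2 * hs - (18 * Y * A + 9 * Y + X * s) * hA
  have hB' : 25 * Y - 3 * X * s = 54 * Y * B ^ 2 := mul_left_cancel₀ h6 <| by
    linear_combination 3 * hXY - X ^ 2 * hs - (18 * Y * B + 9 * Y - X * s) * hB
  rw [exists_zmod_root_iff_resolvent_sq_pow_eq hM hsum hprod hAB, hA', hB', mul_pow,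
    mul_pow _ (B ^ 2), mul_right_inj' (pow_ne_zero M h54)]

end Cardano

section

theorem EisensteinInt.four_mul_norm (z : EisensteinInt) :
    4 * z.norm = z.trace ^ 2 + 3 * z.im ^ 2 := by
  rw [norm_eq, trace_def]; ring

theorem EisensteinInt.exists_trace_eq_im_eq {t i : ℤ} (h : Even (t + i)) :
    ∃ z : EisensteinInt, z.trace = t ∧ z.im = i := by
  obtain ⟨a, ha⟩ := h
  exact ⟨⟨a, i⟩, by rw [trace_def]; linear_combination -ha, rfl⟩

variable {k X Y : ℤ}

theorem even_iff_even_of_four_mul_eq (h : 4 * k = X ^ 2 + 23 * Y ^ 2) : Even X ↔ Even Y := by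
  have heven : Even (X ^ 2 + 23 * Y ^ 2) := h ▸ ⟨2 * k, by ring⟩
  simpa [Int.even_add, Int.even_mul, Int.even_pow, (by decide : ¬ Even (23 : ℤ))] using heven

theorem exists_isCubicSymbol_apply_eq_one_of_not_three_dvd (h : 4 * k = X ^ 2 + 23 * Y ^ 2)
    (hkY : IsCoprime k Y) (hX : ¬ 3 ∣ X) :
    ∃ θ χ, IsCubicSymbol θ χ ∧ IsCoprime k θ.norm ∧ χ k = 1 ∧ θ.trace = X ∧ θ.im = -3 * Y := by
  obtain ⟨θ, htrace, him⟩ :=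
    EisensteinInt.exists_trace_eq_im_eq (t := X) (i := -3 * Y) <| by
      have := even_iff_even_of_four_mul_eq h
      grind
  have hnorm : θ.norm = k + Y ^ 2 := by
    have := θ.four_mul_norm
    rw [htrace, him] at this
    linarith
  have hθ : IsPrimary θ := .of_not_three_dvd_norm (him ▸ ⟨-Y, by ring⟩) fun hN => hX <| by
    refine Int.prime_three.dvd_of_dvd_pow (n := 2) ?_
    rw [show X ^ 2 = 4 * θ.norm + 3 * (-9 * Y ^ 2) by rw [hnorm]; linear_combination -h]
    exact dvd_add (hN.mul_left 4) (dvd_mul_right _ _)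
  obtain ⟨χ, hχ⟩ := hθ.exists_isCubicSymbol
  have h3 : IsCoprime 3 θ.norm :=
    (Int.prime_three.coprime_iff_not_dvd).2 hθ.not_three_dvd_norm
  have hNY : IsCoprime Y θ.norm := by
    rw [hnorm, sq, IsCoprime.add_mul_left_right_iff]
    exact hkY.symm
  have hNX : IsCoprime X θ.norm := by
    have h27 : IsCoprime (27 * Y ^ 2) θ.norm := by
      rw [show (27 : ℤ) = 3 ^ 3 by norm_num]
      exact h3.pow_left.mul_left hNY.pow_left
    have : IsCoprime (X * -X) θ.norm := by
      rw [show 27 * Y ^ 2 = X * -X + 4 * θ.norm by rw [hnorm]; linarith] at h27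
      exact IsCoprime.add_mul_right_left_iff.1 h27
    exact this.of_mul_left_left
  have hχX : χ (X ^ 2) = 1 := by
    rw [map_pow, hχ.apply_eq_one_of_dvd_trace hX hNX htrace.symm.dvd, one_pow]
  refine ⟨θ, χ, hχ, ?_, hχ.apply_eq_one_of_norm_dvd h3 hχX ⟨23, ?_⟩, htrace, him⟩
  · rw [hnorm, add_comm]; simpa using (hkY.pow_right (n := 2)).add_mul_left_right 1
  · rw [hnorm]; linear_combination h

theorem exists_isCubicSymbol_apply_eq_one_of_three_dvd (h : 4 * k = X ^ 2 + 23 * Y ^ 2)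
    (hkY : IsCoprime k Y) (hX : 3 ∣ X) (hY : ¬ 3 ∣ Y) :
    ∃ θ χ, IsCubicSymbol θ χ ∧ IsCoprime k θ.norm ∧ χ k = 1 ∧
      θ.trace = 25 * Y ∧ θ.im = 3 * X := by
  obtain ⟨θ, htrace, him⟩ :=
    EisensteinInt.exists_trace_eq_im_eq (t := 25 * Y) (i := 3 * X) <| by
      have := even_iff_even_of_four_mul_eq h
      grind
  have hnorm : θ.norm = 27 * k + Y ^ 2 := by
    have := θ.four_mul_norm
    rw [htrace, him] at this
    linarith
  have h3N : ¬ 3 ∣ θ.norm := fun hN => hY <| Int.prime_three.dvd_of_dvd_pow (n := 2) <| by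
    rw [show Y ^ 2 = θ.norm - 3 * (9 * k) by rw [hnorm]; ring]
    exact dvd_sub hN (dvd_mul_right _ _)
  have h3 : IsCoprime 3 θ.norm := Int.prime_three.coprime_iff_not_dvd.2 h3N
  obtain ⟨χ, hχ⟩ := (IsPrimary.of_not_three_dvd_norm ⟨X, him⟩ h3N).exists_isCubicSymbol
  have hNY : IsCoprime Y θ.norm := by
    rw [hnorm, sq, IsCoprime.add_mul_left_right_iff, show (27 : ℤ) = 3 ^ 3 by norm_num]
    exact ((Int.prime_three.coprime_iff_not_dvd.2 hY).symm.pow_right).mul_right hkY.symm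
  have hχY : χ (-1 * Y ^ 2) = 1 := by
    rw [map_mul, map_pow, hχ.apply_neg_one,
      hχ.apply_eq_one_of_dvd_trace hY hNY ⟨25, by rw [htrace]; ring⟩, one_pow, one_mul]
  refine ⟨θ, χ, hχ, ?_, hχ.apply_eq_one_of_norm_dvd h3 hχY ⟨1, ?_⟩, htrace, him⟩
  · rw [hnorm, add_comm]; exact hkY.pow_right.add_mul_right_right 27
  · rw [hnorm]; ring

/- The two choices of `θ` are proportional to the resolvent root `A` and to its square. They are
congruent to `X` and to `Y` modulo `3` up to sign, so at least one of them is primary. -/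
theorem exists_isCubicSymbol_apply_eq_one (h : 4 * k = X ^ 2 + 23 * Y ^ 2)
    (hkY : IsCoprime k Y) (hk3 : ¬ 3 ∣ k) :
    ∃ θ χ, IsCubicSymbol θ χ ∧ IsCoprime k θ.norm ∧ χ k = 1 ∧
      (θ.trace = X ∧ θ.im = -3 * Y ∨ θ.trace = 25 * Y ∧ θ.im = 3 * X) := by
  by_cases hX : 3 ∣ X
  · have hY : ¬ 3 ∣ Y := fun hY => hk3 <| by
      have h4 : 3 ∣ 4 * k := by
        rw [h]; exact dvd_add (dvd_pow hX two_ne_zero) ((dvd_pow hY two_ne_zero).mul_left 23)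
      omega
    obtain ⟨θ, χ, hχ, hkθ, hχk, hθ⟩ :=
      exists_isCubicSymbol_apply_eq_one_of_three_dvd h hkY hX hY
    exact ⟨θ, χ, hχ, hkθ, hχk, .inr hθ⟩
  · obtain ⟨θ, χ, hχ, hkθ, hχk, hθ⟩ :=
      exists_isCubicSymbol_apply_eq_one_of_not_three_dvd h hkY hX
    exact ⟨θ, χ, hχ, hkθ, hχk, .inl hθ⟩

end

theorem EisensteinInt.map_pow_eq_map_star_pow_iff {F : Type*} [Field F] (h2 : (2 : F) ≠ 0)
    (f : EisensteinInt →+* F) (z : EisensteinInt) (n : ℕ) :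
    f z ^ n = f (star z) ^ n ↔
      (z.trace + z.im * f sqrtNegThree) ^ n = (z.trace - z.im * f sqrtNegThree) ^ n := by
  have hmap (w : EisensteinInt) : 2 * f w = w.trace + w.im * f sqrtNegThree := by
    rw [← map_ofNat f 2, ← map_mul, two_mul_eq, map_add, map_mul, map_intCast, map_intCast]
  have hstar : 2 * f (star z) = z.trace - z.im * f sqrtNegThree := by
    rw [hmap, trace_star, im_star, Int.cast_neg]; ring
  rw [← hmap, ← hstar, mul_pow, mul_pow, mul_right_inj' (pow_ne_zero n h2)]

section Prime

variable {p : ℕ} [Fact p.Prime] {k X Y : ℤ}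

theorem exists_zmod_root_iff_map_pow_eq {F : Type*} [Field F] [CharP F p] [IsAlgClosed F]
    (hp2 : p ≠ 2) (hp3 : p ≠ 3) (hp23 : p ≠ 23) (h : 4 * k = X ^ 2 + 23 * Y ^ 2)
    (hpk : (p : ℤ) ∣ k) (hpY : ¬ (p : ℤ) ∣ Y) {θ : EisensteinInt}
    (hθ : θ.trace = X ∧ θ.im = -3 * Y ∨ θ.trace = 25 * Y ∧ θ.im = 3 * X)
    (f : EisensteinInt →+* F) {M : ℕ} (hM : 3 * M + 1 = p ^ 2) :
    (∃ x : ZMod p, x ^ 3 - x - 1 = 0) ↔ f θ ^ M = f (star θ) ^ M := by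
  have h2 : (2 : F) ≠ 0 := mod_cast CharP.cast_ne_zero_of_ne_of_prime F Nat.prime_two hp2
  have h3 : (3 : F) ≠ 0 := mod_cast CharP.cast_ne_zero_of_ne_of_prime F Nat.prime_three hp3
  have h23 : (23 : F) ≠ 0 :=
    mod_cast CharP.cast_ne_zero_of_ne_of_prime F (by norm_num : Nat.Prime 23) hp23
  have hs : f EisensteinInt.sqrtNegThree ^ 2 = -3 := by
    rw [← map_pow, EisensteinInt.sqrtNegThree_sq, map_neg, map_ofNat]
  have hY : (Y : F) ≠ 0 := by rwa [Ne, CharP.intCast_eq_zero_iff F p]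
  have hXY : (X : F) ^ 2 = -23 * (Y : F) ^ 2 := by
    have hk : (k : F) = 0 := (CharP.intCast_eq_zero_iff F p k).2 hpk
    have hcast : 4 * (k : F) = X ^ 2 + 23 * Y ^ 2 := mod_cast congrArg (Int.cast : ℤ → F) h
    linear_combination 4 * hk - hcast
  have hX : (X : F) ≠ 0 := fun h0 =>
    mul_ne_zero h23 (pow_ne_zero 2 hY) (by linear_combination hXY - X * h0)
  rw [EisensteinInt.map_pow_eq_map_star_pow_iff h2]
  rcases hθ with ⟨ht, hi⟩ | ⟨ht, hi⟩
  · rw [exists_zmod_root_iff_sub_three_mul_pow_eq hM h2 h3 hs hXY hX hY, ht, hi]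
    push_cast; rfl
  · rw [exists_zmod_root_iff_twentyFive_mul_add_pow_eq hM h2 h3 hs hXY hX hY, ht, hi]
    push_cast; rfl

theorem exists_zmod_root_iff_apply_prime_eq_one (hp2 : p ≠ 2) (hp3 : p ≠ 3) (hp23 : p ≠ 23)
    (h : 4 * k = X ^ 2 + 23 * Y ^ 2) (hpk : (p : ℤ) ∣ k) (hpY : ¬ (p : ℤ) ∣ Y)
    {θ : EisensteinInt} {χ : ℤ →* EisensteinInt} (hχ : IsCubicSymbol θ χ)
    (hpθ : IsCoprime (p : ℤ) θ.norm)
    (hθ : θ.trace = X ∧ θ.im = -3 * Y ∨ θ.trace = 25 * Y ∧ θ.im = 3 * X) :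
    (∃ x : ZMod p, x ^ 3 - x - 1 = 0) ↔ χ p = 1 := by
  have hp3' : ¬ 3 ∣ p := mt (Nat.Prime.dvd_iff_eq Fact.out (by decide)).1 hp3
  obtain ⟨M, hM⟩ := exists_three_mul_add_one_eq_sq hp3'
  obtain ⟨f⟩ := EisensteinInt.nonempty_ringHom (AlgebraicClosure (ZMod p))
  rw [hχ.apply_prime_eq_one_iff hp3 hpθ hM f,
    exists_zmod_root_iff_map_pow_eq hp2 hp3 hp23 h hpk hpY hθ f hM]

theorem not_dvd_of_mul_eq_sq_add {c : ℤ} (hc : ¬ (p : ℤ) ∣ c)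
    (h : c * p = X ^ 2 + 23 * Y ^ 2) : ¬ (p : ℤ) ∣ Y := fun hY => hc <| by
  have hp : Prime (p : ℤ) := Nat.prime_iff_prime_int.1 Fact.out
  have hX : (p : ℤ) ∣ X := hp.dvd_of_dvd_pow (n := 2) <| by
    rw [show X ^ 2 = p * c - 23 * Y ^ 2 by linear_combination -h]
    exact dvd_sub (dvd_mul_right _ _) ((dvd_pow hY two_ne_zero).mul_left 23)
  refine (mul_dvd_mul_iff_right hp.ne_zero).1 ?_
  rw [h, ← sq]
  exact dvd_add (pow_dvd_pow_of_dvd hX 2) ((pow_dvd_pow_of_dvd hY 2).mul_left 23)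

theorem not_dvd_two_pow (hp2 : p ≠ 2) (n : ℕ) : ¬ (p : ℤ) ∣ 2 ^ n := fun h =>
  hp2 (Nat.prime_eq_prime_of_dvd_pow Fact.out Nat.prime_two (mod_cast h))

theorem isSquare_neg_twentyThree_of_eq_sq_add (h : (p : ℤ) = X ^ 2 + 23 * Y ^ 2) :
    IsSquare (-23 : ZMod p) := by
  have hp : Prime (p : ℤ) := Nat.prime_iff_prime_int.1 Fact.out
  have hpY : ¬ (p : ℤ) ∣ Y := not_dvd_of_mul_eq_sq_add hp.not_dvd_one (by rwa [one_mul])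
  have hY : (Y : ZMod p) ≠ 0 := by rwa [Ne, ZMod.intCast_zmod_eq_zero_iff_dvd]
  have hXY : (X : ZMod p) ^ 2 + 23 * (Y : ZMod p) ^ 2 = 0 := by
    rw [← ZMod.natCast_self p, ← Int.cast_natCast p, h]; push_cast; rfl
  refine ⟨X / Y, ?_⟩
  field_simp
  linear_combination -hXY

theorem exists_zmod_root_of_eq_sq_add (hp2 : p ≠ 2) (hp3 : p ≠ 3) (hp23 : p ≠ 23)
    (h : (p : ℤ) = X ^ 2 + 23 * Y ^ 2) : ∃ x : ZMod p, x ^ 3 - x - 1 = 0 := by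
  have hp : Prime (p : ℤ) := Nat.prime_iff_prime_int.1 Fact.out
  have h4 : 4 * (p : ℤ) = (2 * X) ^ 2 + 23 * (2 * Y) ^ 2 := by linear_combination 4 * h
  have hpY : ¬ (p : ℤ) ∣ 2 * Y := not_dvd_of_mul_eq_sq_add (not_dvd_two_pow hp2 2) h4
  have hp3' : ¬ 3 ∣ p := mt (Nat.Prime.dvd_iff_eq Fact.out (by decide)).1 hp3
  obtain ⟨θ, χ, hχ, hpθ, hχp, hθ⟩ :=
    exists_isCubicSymbol_apply_eq_one h4 (hp.coprime_iff_not_dvd.2 hpY) (mod_cast hp3')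
  exact (exists_zmod_root_iff_apply_prime_eq_one hp2 hp3 hp23 h4 dvd_rfl hpY hχ hpθ hθ).2 hχp

theorem not_exists_zmod_root_of_eight_mul_eq (hp2 : p ≠ 2) (hp3 : p ≠ 3) (hp23 : p ≠ 23)
    (hY : Odd Y) (h : 8 * (p : ℤ) = X ^ 2 + 23 * Y ^ 2) :
    ¬ ∃ x : ZMod p, x ^ 3 - x - 1 = 0 := by
  have hp : Prime (p : ℤ) := Nat.prime_iff_prime_int.1 Fact.out
  have h4 : 4 * (2 * (p : ℤ)) = X ^ 2 + 23 * Y ^ 2 := by linear_combination h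
  have hX : Odd X := by
    rwa [← Int.not_even_iff_odd, even_iff_even_of_four_mul_eq h4, Int.not_even_iff_odd]
  have hpY : ¬ (p : ℤ) ∣ Y := not_dvd_of_mul_eq_sq_add (not_dvd_two_pow hp2 3) h
  have hp3' : ¬ 3 ∣ p := mt (Nat.Prime.dvd_iff_eq Fact.out (by decide)).1 hp3
  have hcop : IsCoprime (2 * (p : ℤ)) Y :=
    (Int.isCoprime_two_left.2 hY).mul_left (hp.coprime_iff_not_dvd.2 hpY)
  obtain ⟨θ, χ, hχ, hpθ, hχp, hθ⟩ := exists_isCubicSymbol_apply_eq_one h4 hcop (by omega)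
  have hodd : Odd θ.im := by
    rcases hθ with ⟨-, hi⟩ | ⟨-, hi⟩ <;> rw [hi]
    exacts [(by decide : Odd (-3 : ℤ)).mul hY, (by decide : Odd (3 : ℤ)).mul hX]
  rw [exists_zmod_root_iff_apply_prime_eq_one hp2 hp3 hp23 h4 (dvd_mul_left _ _) hpY hχ
    hpθ.of_mul_left_right hθ]
  intro hχp1
  rw [map_mul, hχp1, mul_one] at hχp
  exact hχ.apply_two_ne_one hodd hχp

end Prime

/-- The integer `n` is represented by the binary quadratic form `a x² + b x y + c y²`. -/
def Represents (a b c n : ℤ) : Prop := ∃ x y : ℤ, a * x ^ 2 + b * x * y + c * y ^ 2 = n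

namespace Represents

variable {a b c n : ℤ}

theorem swap (h : Represents a b c n) : Represents c b a n :=
  let ⟨x, y, hxy⟩ := h
  ⟨y, x, by linear_combination hxy⟩

theorem neg (h : Represents a b c n) : Represents a (-b) c n :=
  let ⟨x, y, hxy⟩ := h
  ⟨x, -y, by linear_combination hxy⟩

theorem translate (h : Represents a b c n) (k : ℤ) :
    Represents a (b + 2 * a * k) (a * k ^ 2 + b * k + c) n :=
  let ⟨x, y, hxy⟩ := h
  ⟨x - k * y, y, by linear_combination hxy⟩

theorem one_or_two_of_reduced (h : Represents a b c n) (hdisc : b ^ 2 + 23 = 4 * a * c)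
    (ha : 0 < a) (hba : |b| ≤ a) (hac : a ≤ c) :
    Represents 1 1 6 n ∨ Represents 2 1 3 n := by
  have ha2 : a ≤ 2 := by nlinarith [sq_abs b, abs_nonneg b]
  obtain ⟨hb1, hb2⟩ := abs_le.1 hba
  interval_cases a
  · obtain ⟨rfl, rfl⟩ | ⟨rfl, rfl⟩ : b = 1 ∧ c = 6 ∨ b = -1 ∧ c = 6 := by
      interval_cases b <;> omega
    · exact .inl h
    · exact .inl h.neg
  · obtain ⟨rfl, rfl⟩ | ⟨rfl, rfl⟩ : b = 1 ∧ c = 3 ∨ b = -1 ∧ c = 3 := by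
      interval_cases b <;> omega
    · exact .inr h
    · exact .inr h.neg

theorem one_or_two_of_disc_eq (h : Represents a b c n) (ha : 0 < a)
    (hdisc : b ^ 2 + 23 = 4 * a * c) : Represents 1 1 6 n ∨ Represents 2 1 3 n := by
  induction hm : a.toNat using Nat.strong_induction_on generalizing a b c with
  | _ m ih =>
  obtain ⟨k, hk⟩ : ∃ k, |b + 2 * a * k| ≤ a := by
    refine ⟨-((b + a) / (2 * a)), abs_le.2 ?_⟩
    have := Int.emod_add_mul_ediv (b + a) (2 * a)
    have := Int.emod_nonneg (b + a) (by omega : 2 * a ≠ 0)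
    have := Int.emod_lt_of_pos (b + a) (by omega : 0 < 2 * a)
    constructor <;> linarith
  have hdisc' : (b + 2 * a * k) ^ 2 + 23 = 4 * a * (a * k ^ 2 + b * k + c) := by
    linear_combination hdisc
  have h' := h.translate k
  by_cases hac : a ≤ a * k ^ 2 + b * k + c
  · exact h'.one_or_two_of_reduced hdisc' ha hk hac
  · have hc : 0 < a * k ^ 2 + b * k + c := by
      refine pos_of_mul_pos_right (a := 4 * a) (by rw [← hdisc']; positivity) (by omega)
    exact ih _ (by omega) h'.swap hc (by linear_combination hdisc') rfl

theorem exists_sq_add_of_odd (h : Represents 1 1 6 n) (hn : Odd n) :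
    ∃ X Y : ℤ, n = X ^ 2 + 23 * Y ^ 2 := by
  obtain ⟨x, y, hxy⟩ := h
  have hy : Even y := by_contra fun hy => Int.not_even_iff_odd.2 hn <| by
    simp [← hxy, Int.even_add, Int.even_mul, Int.even_pow, (by decide : Even (6 : ℤ)), hy]
  obtain ⟨v, rfl⟩ := hy
  exact ⟨x + v, v, by linear_combination -hxy⟩

theorem exists_eight_mul_eq_of_odd (h : Represents 2 1 3 n) (hn : Odd n) :
    ∃ X Y : ℤ, Odd Y ∧ 8 * n = X ^ 2 + 23 * Y ^ 2 := by
  obtain ⟨x, y, hxy⟩ := h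
  have hy : Odd y := Int.not_even_iff_odd.1 fun hy => Int.not_even_iff_odd.2 hn <| by
    simp [← hxy, Int.even_add, Int.even_pow, hy]
  exact ⟨4 * x + y, y, hy, by linear_combination -8 * hxy⟩

end Represents

section

variable {p : ℕ} [Fact p.Prime]

theorem exists_sq_add_eq_four_mul (hp2 : p ≠ 2) (hp : IsSquare (-23 : ZMod p)) :
    ∃ t c : ℤ, t ^ 2 + 23 = 4 * p * c := by
  have hodd : Odd (p : ℤ) := mod_cast (Fact.out : p.Prime).odd_of_ne_two hp2
  obtain ⟨d, hd⟩ := hp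
  obtain ⟨t, ht, k, hk⟩ : ∃ t : ℤ, Odd t ∧ (p : ℤ) ∣ t ^ 2 + 23 := by
    have hdvd (t : ℤ) (ht : (t : ZMod p) = d) : (p : ℤ) ∣ t ^ 2 + 23 := by
      rw [← ZMod.intCast_zmod_eq_zero_iff_dvd]
      push_cast
      rw [ht]
      linear_combination -hd
    rcases Int.even_or_odd d.val with h | h
    · exact ⟨d.val + p, h.add_odd hodd, hdvd _ (by simp)⟩
    · exact ⟨d.val, h, hdvd _ (by simp)⟩
  have h4 : (4 : ℤ) ∣ p * k := by
    obtain ⟨j, rfl⟩ := ht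
    exact ⟨j ^ 2 + j + 6, by linear_combination -hk⟩
  have hcop : IsCoprime (4 : ℤ) p := (Int.isCoprime_two_left.2 hodd).pow_left (m := 2)
  obtain ⟨c, rfl⟩ := hcop.dvd_of_dvd_mul_left h4
  exact ⟨t, c, by rw [hk]; ring⟩

theorem eq_sq_add_or_eight_mul_eq_of_isSquare (hp2 : p ≠ 2) (hp : IsSquare (-23 : ZMod p)) :
    (∃ X Y : ℤ, (p : ℤ) = X ^ 2 + 23 * Y ^ 2) ∨
      ∃ X Y : ℤ, Odd Y ∧ 8 * (p : ℤ) = X ^ 2 + 23 * Y ^ 2 := by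
  have hodd : Odd (p : ℤ) := mod_cast (Fact.out : p.Prime).odd_of_ne_two hp2
  obtain ⟨t, c, hdisc⟩ := exists_sq_add_eq_four_mul hp2 hp
  have hrep : Represents p t c p := ⟨1, 0, by ring⟩
  exact (hrep.one_or_two_of_disc_eq (mod_cast (Fact.out : p.Prime).pos) hdisc).imp
    (·.exists_sq_add_of_odd hodd) (·.exists_eight_mul_eq_of_odd hodd)

end

/-- `α`, `β`, `γ` are the three roots of `x³ - x - 1`, counted with multiplicity: the fields are
Vieta's relations. -/
structure PerrinRoots {R : Type*} [CommRing R] (α β γ : R) : Prop where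
  sum_eq : α + β + γ = 0
  sum_mul_eq : α * β + β * γ + γ * α = -1
  prod_eq : α * β * γ = 1

namespace PerrinRoots

section CommRing

variable {R S : Type*} [CommRing R] [CommRing S] {α β γ : R}

theorem rotate (h : PerrinRoots α β γ) : PerrinRoots β γ α where
  sum_eq := by linear_combination h.sum_eq
  sum_mul_eq := by linear_combination h.sum_mul_eq
  prod_eq := by linear_combination h.prod_eq

theorem map_iff {f : R →+* S} (hf : Function.Injective f) :
    PerrinRoots (f α) (f β) (f γ) ↔ PerrinRoots α β γ := by
  constructor
  · rintro ⟨h1, h2, h3⟩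
    exact ⟨hf (by simpa using h1), hf (by simpa using h2), hf (by simpa using h3)⟩
  · rintro ⟨h1, h2, h3⟩
    constructor <;> simp only [← map_add, ← map_mul, *, map_zero, map_neg, map_one]

theorem cube_sub_self_sub_one (h : PerrinRoots α β γ) (y : R) :
    y ^ 3 - y - 1 = (y - α) * ((y - β) * (y - γ)) := by
  linear_combination y ^ 2 * h.sum_eq - y * h.sum_mul_eq + h.prod_eq

theorem isRoot (h : PerrinRoots α β γ) : α ^ 3 - α - 1 = 0 := by
  rw [h.cube_sub_self_sub_one, sub_self, zero_mul]

theorem mul_eq (h : PerrinRoots α β γ) : β * γ = α ^ 2 - 1 := by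
  linear_combination h.sum_mul_eq - α * h.sum_eq

theorem sum_sq_eq (h : PerrinRoots α β γ) : α ^ 2 + β ^ 2 + γ ^ 2 = 2 := by
  linear_combination (α + β + γ) * h.sum_eq - 2 * h.sum_mul_eq

theorem sq_eq_neg_twentyThree (h : PerrinRoots α β γ) :
    ((β - γ) * (3 * α ^ 2 - 1)) ^ 2 = -23 := by
  have hsq : (β - γ) ^ 2 = 4 - 3 * α ^ 2 := by
    linear_combination (3 * α + β + γ) * h.sum_eq - 4 * h.sum_mul_eq
  rw [mul_pow, hsq]
  linear_combination -27 * (α ^ 3 - α + 1) * h.isRoot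

theorem sum_pow_eq {P : ℕ → ℤ} (h0 : P 0 = 3) (h1 : P 1 = 0) (h2 : P 2 = 2)
    (hrec : ∀ n, P (n + 3) = P (n + 1) + P n) (h : PerrinRoots α β γ) :
    ∀ n, α ^ n + β ^ n + γ ^ n = P n
  | 0 => by rw [h0]; norm_num
  | 1 => by rw [h1]; simpa using h.sum_eq
  | 2 => by rw [h2]; exact_mod_cast h.sum_sq_eq
  | n + 3 => by
    rw [hrec, Int.cast_add, ← sum_pow_eq h0 h1 h2 hrec h (n + 1), ← sum_pow_eq h0 h1 h2 hrec h n]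
    linear_combination
      α ^ n * h.isRoot + β ^ n * h.rotate.isRoot + γ ^ n * h.rotate.rotate.isRoot

end CommRing

section Field

variable {F : Type*} [Field F] {α β γ a b c : F}

theorem eq_and_eq_or_eq_and_eq (h : PerrinRoots α b c) (h' : PerrinRoots α β γ) :
    b = β ∧ c = γ ∨ b = γ ∧ c = β := by
  have hb : (b - β) * (b - γ) = 0 := by
    linear_combination b * (h.sum_eq - h'.sum_eq) - h.mul_eq + h'.mul_eq
  rcases mul_eq_zero.1 hb with hb | hb
  · exact .inl ⟨by linear_combination hb, by linear_combination h.sum_eq - h'.sum_eq - hb⟩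
  · exact .inr ⟨by linear_combination hb, by linear_combination h.sum_eq - h'.sum_eq - hb⟩

theorem sq_add_two_mul_ne_two (h23 : (23 : F) ≠ 0) (h : PerrinRoots α β γ) :
    α ^ 2 + 2 * (β * γ) ≠ 2 := fun hsum => h23 <| by
  have hsq : 3 * α ^ 2 = 4 := by linear_combination hsum - 2 * h.mul_eq
  have hα : α = 3 := by linear_combination 3 * h.isRoot - α * hsq
  rw [hα] at hsq
  linear_combination hsq

theorem eq_of_sum_mul_eq_two (h3 : (3 : F) ≠ 0) (h23 : (23 : F) ≠ 0) (h : PerrinRoots a b c)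
    (h' : PerrinRoots α β γ) (hsum : a * α + b * β + c * γ = 2) : a = α ∧ b = β ∧ c = γ := by
  have hcycle (hs : α * β + β * γ + γ * α = 2) : False :=
    h3 (by linear_combination h'.sum_mul_eq - hs)
  have ha := h'.cube_sub_self_sub_one a
  rw [h.isRoot, eq_comm, mul_eq_zero, mul_eq_zero, sub_eq_zero, sub_eq_zero, sub_eq_zero] at ha
  rcases ha with rfl | rfl | rfl
  · rcases h.eq_and_eq_or_eq_and_eq h' with ⟨rfl, rfl⟩ | ⟨rfl, rfl⟩
    · exact ⟨rfl, rfl, rfl⟩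
    · exact absurd (by linear_combination hsum) (h'.sq_add_two_mul_ne_two h23)
  · rcases h.eq_and_eq_or_eq_and_eq h'.rotate with ⟨rfl, rfl⟩ | ⟨rfl, rfl⟩
    · exact (hcycle (by linear_combination hsum)).elim
    · exact absurd (by linear_combination hsum) (h'.rotate.rotate.sq_add_two_mul_ne_two h23)
  · rcases h.eq_and_eq_or_eq_and_eq h'.rotate.rotate with ⟨rfl, rfl⟩ | ⟨rfl, rfl⟩
    · exact (hcycle (by linear_combination hsum)).elim
    · exact absurd (by linear_combination hsum) (h'.rotate.sq_add_two_mul_ne_two h23)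

end Field

end PerrinRoots

theorem exists_perrinRoots_iff {F : Type*} [Field F] (h2 : (2 : F) ≠ 0) (h23 : (23 : F) ≠ 0) :
    (∃ α β γ : F, PerrinRoots α β γ) ↔ IsSquare (-23 : F) ∧ ∃ x : F, x ^ 3 - x - 1 = 0 := by
  constructor
  · rintro ⟨α, β, γ, h⟩
    exact ⟨⟨_, h.sq_eq_neg_twentyThree.symm.trans (sq _)⟩, α, h.isRoot⟩
  rintro ⟨⟨d, hd⟩, x, hx⟩
  have hdisc : (4 - 3 * x ^ 2) * (3 * x ^ 2 - 1) ^ 2 = -23 := by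
    linear_combination -27 * (x ^ 3 - x + 1) * hx
  have hderiv : 3 * x ^ 2 - 1 ≠ 0 := fun h0 => h23 <| by
    linear_combination hdisc - (4 - 3 * x ^ 2) * (3 * x ^ 2 - 1) * h0
  obtain ⟨s, hs⟩ : ∃ s, s ^ 2 = 4 - 3 * x ^ 2 :=
    ⟨d / (3 * x ^ 2 - 1), by
      rw [div_pow, div_eq_iff (pow_ne_zero 2 hderiv), hdisc, hd, sq]⟩
  have hmul : (-x + s) / 2 * ((-x - s) / 2) = x ^ 2 - 1 := by
    field_simp
    linear_combination -hs
  have hadd : (-x + s) / 2 + (-x - s) / 2 = -x := by field_simp; ring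
  exact ⟨x, (-x + s) / 2, (-x - s) / 2, by linear_combination hadd,
    by linear_combination x * hadd + hmul, by linear_combination x * hmul + hx⟩

section

variable {p : ℕ} [Fact p.Prime]

theorem PerrinRoots.exists_zmod_of_pow_char_eq {F : Type*} [Field F] [CharP F p] {α β γ : F}
    (h : PerrinRoots α β γ) (hα : α ^ p = α) (hβ : β ^ p = β) (hγ : γ ^ p = γ) :
    ∃ a b c : ZMod p, PerrinRoots a b c := by
  obtain ⟨a, rfl⟩ := pow_char_eq_self_iff.1 hα
  obtain ⟨b, rfl⟩ := pow_char_eq_self_iff.1 hβ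
  obtain ⟨c, rfl⟩ := pow_char_eq_self_iff.1 hγ
  exact ⟨a, b, c, (map_iff (ZMod.castHom_injective F)).1 h⟩

theorem exists_perrinRoots_of_isAlgClosed {F : Type*} [Field F] [IsAlgClosed F]
    (h2 : (2 : F) ≠ 0) (h23 : (23 : F) ≠ 0) : ∃ α β γ : F, PerrinRoots α β γ := by
  have hdeg : (X ^ 3 - X - 1 : F[X]).degree = 3 := by compute_degree!
  obtain ⟨x, hx⟩ := IsAlgClosed.exists_root (X ^ 3 - X - 1 : F[X]) (by rw [hdeg]; decide)
  exact (exists_perrinRoots_iff h2 h23).2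
    ⟨IsAlgClosed.exists_eq_mul_self (-23), x, by simpa using hx⟩

variable {P : ℕ → ℤ}

theorem modEq_two_iff_exists_perrinRoots (h0 : P 0 = 3) (h1 : P 1 = 0) (h2 : P 2 = 2)
    (hrec : ∀ n, P (n + 3) = P (n + 1) + P n) (hp2 : p ≠ 2) (hp3 : p ≠ 3) (hp23 : p ≠ 23) :
    P (p + 1) ≡ 2 [ZMOD p] ↔ ∃ a b c : ZMod p, PerrinRoots a b c := by
  constructor
  · intro hP
    have hne {q : ℕ} (hq : q.Prime) (hpq : p ≠ q) : (q : AlgebraicClosure (ZMod p)) ≠ 0 :=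
      CharP.cast_ne_zero_of_ne_of_prime _ hq hpq
    have h23 := hne (q := 23) (by norm_num) hp23
    obtain ⟨α, β, γ, h⟩ := exists_perrinRoots_of_isAlgClosed (hne Nat.prime_two hp2) h23
    have hfrob : PerrinRoots (α ^ p) (β ^ p) (γ ^ p) :=
      (PerrinRoots.map_iff (frobenius _ p).injective).2 h
    have hsum : α ^ p * α + β ^ p * β + γ ^ p * γ = 2 := by
      simp only [← pow_succ]
      rw [h.sum_pow_eq h0 h1 h2 hrec]
      exact_mod_cast (CharP.intCast_eq_intCast _ p).2 hP
    obtain ⟨hα, hβ, hγ⟩ := hfrob.eq_of_sum_mul_eq_two (hne Nat.prime_three hp3) h23 h hsum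
    exact h.exists_zmod_of_pow_char_eq hα hβ hγ
  · rintro ⟨a, b, c, h⟩
    rw [← ZMod.intCast_eq_intCast_iff, ← h.sum_pow_eq h0 h1 h2 hrec]
    simp only [pow_succ _ p, ZMod.pow_card, ← sq]
    exact_mod_cast h.sum_sq_eq

end

end Perrin

theorem perrin_splitting (P : ℕ → ℤ)
    (h0 : P 0 = 3) (h1 : P 1 = 0) (h2 : P 2 = 2)
    (hrec : ∀ n, P (n + 3) = P (n + 1) + P n)
    (p : ℕ) [Fact p.Prime] (hpe : ¬ (p ∣ 2 * 3 * 23)) :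
    (Int.ModEq (p : ℤ) (P (p + 1)) 2 ↔ ∃ X Y : ℤ, (p : ℤ) = X ^ 2 + 23 * Y ^ 2) ∧
    (Int.ModEq (p : ℤ) (P (p + 1)) 2 ↔
      legendreSym p (-23) = 1 ∧ ∃ x : ZMod p, x ^ 3 - x - 1 = 0) := by
  have hp2 : p ≠ 2 := by rintro rfl; exact hpe (by norm_num)
  have hp3 : p ≠ 3 := by rintro rfl; exact hpe (by norm_num)
  have hp23 : p ≠ 23 := by rintro rfl; exact hpe (by norm_num)
  have hne2 : (2 : ZMod p) ≠ 0 := mod_cast CharP.cast_ne_zero_of_ne_of_prime _ Nat.prime_two hp2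
  have hne23 : (23 : ZMod p) ≠ 0 :=
    mod_cast CharP.cast_ne_zero_of_ne_of_prime _ (by norm_num : Nat.Prime 23) hp23
  have hsq : legendreSym p (-23) = 1 ↔ IsSquare (-23 : ZMod p) := by
    rw [legendreSym.eq_one_iff p (by simpa using hne23)]
    push_cast; rfl
  rw [Perrin.modEq_two_iff_exists_perrinRoots h0 h1 h2 hrec hp2 hp3 hp23,
    Perrin.exists_perrinRoots_iff hne2 hne23, hsq]
  refine ⟨⟨fun ⟨hd, hx⟩ => ?_, fun ⟨X, Y, h⟩ => ?_⟩, Iff.rfl⟩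
  · refine (Perrin.eq_sq_add_or_eight_mul_eq_of_isSquare hp2 hd).resolve_right ?_
    rintro ⟨X, Y, hY, h⟩
    exact Perrin.not_exists_zmod_root_of_eight_mul_eq hp2 hp3 hp23 hY h hx
  · exact ⟨Perrin.isSquare_neg_twentyThree_of_eq_sq_add h,
      Perrin.exists_zmod_root_of_eq_sq_add hp2 hp3 hp23 h⟩
end

section
/- Let (B_n) be the Berstel sequence defined by B_0 = B_1 = 0, B_2 = 1, and B_{n+3} = 2B_{n+2} - 4B_{n+1} + 4B_n for n ≥ 0. Then for any prime p not dividing 2·3·11·13, p divides B_p if and only if there exist integers X, Y with p = X^2 + 11Y^2. -/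
/-!
Modulo `p`, the term `B p` vanishes exactly when Frobenius fixes the three roots of
`X ^ 3 - 2 * X ^ 2 + 4 * X - 4`, whose discriminant is `-4 ^ 2 * 11`. In that case `-11` is a
square modulo `p`, and since the ring of integers of `ℚ(√-11)` is principal,
`p = x ^ 2 + x * y + 3 * y ^ 2`.

Conversely, such a representation forces Frobenius to permute the roots evenly, so it is trivial
if and only if its square fixes a Lagrange resolvent of the roots. Modulo `p` the cube of that
resolvent is, up to an integer cube, `C ^ 2 * star C` for an explicit Eisenstein integer `C`
depending on `x` and `y`, so the condition says that the rational cubic residue symbol `χ` of `C`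
is trivial at `p`. By cubic reciprocity, obtained here from the Frobenius action on Gauss sums, `χ`
is a Dirichlet character modulo `norm C`. With `b = 2 * x + 5 * y` one has
`3 ^ 6 * p = 2 ^ 5 * b ^ 2 + norm C`, while `χ` is trivial on the primes dividing `b`; hence
`χ p = χ 2 ^ 2`, which is `1` exactly when `y` is even. For `y = 2 * k` the form
`x ^ 2 + x * y + 3 * y ^ 2` is `(x + k) ^ 2 + 11 * k ^ 2`.
-/

open QuadraticAlgebra
open scoped QuadraticAlgebra

namespace ImaginaryQuadratic

section Norm

variable {a b : ℤ}

theorem four_mul_norm (z : QuadraticAlgebra ℤ a b) :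
    4 * z.norm = (2 * z.re + b * z.im) ^ 2 - (b ^ 2 + 4 * a) * z.im ^ 2 := by
  rw [norm_def]; ring

theorem norm_nonneg (hD : b ^ 2 + 4 * a < 0) (z : QuadraticAlgebra ℤ a b) : 0 ≤ z.norm := by
  nlinarith [four_mul_norm z, sq_nonneg (2 * z.re + b * z.im), sq_nonneg z.im]

theorem norm_eq_zero_iff (hD : b ^ 2 + 4 * a < 0) {z : QuadraticAlgebra ℤ a b} :
    z.norm = 0 ↔ z = 0 := by
  refine ⟨fun hz ↦ ?_, fun hz ↦ hz ▸ norm_zero⟩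
  have hnorm := four_mul_norm z
  rw [hz] at hnorm
  have him : z.im = 0 := by
    by_contra him
    nlinarith [sq_nonneg (2 * z.re + b * z.im), sq_pos_of_ne_zero him]
  have hre : z.re = 0 := by
    rw [him] at hnorm
    nlinarith
  exact QuadraticAlgebra.ext hre him

theorem norm_pos (hD : b ^ 2 + 4 * a < 0) {z : QuadraticAlgebra ℤ a b} (hz : z ≠ 0) :
    0 < z.norm :=
  (norm_nonneg hD z).lt_of_ne' (mt (norm_eq_zero_iff hD).1 hz)

theorem isDomain (hD : b ^ 2 + 4 * a < 0) : IsDomain (QuadraticAlgebra ℤ a b) :=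
  have : NoZeroDivisors (QuadraticAlgebra ℤ a b) := ⟨fun {x y} hxy ↦ by
    simpa only [← norm_eq_zero_iff hD, map_mul, mul_eq_zero] using hxy⟩
  NoZeroDivisors.to_isDomain _

theorem norm_eq_mul_star (z : QuadraticAlgebra ℤ a b) :
    ((z.norm : ℤ) : QuadraticAlgebra ℤ a b) = z * star z := by
  rw [← algebraMap_norm_eq_mul_star, eq_intCast]

theorem dvd_norm (z : QuadraticAlgebra ℤ a b) : z ∣ (z.norm : QuadraticAlgebra ℤ a b) :=
  ⟨star z, norm_eq_mul_star z⟩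

theorem exists_abs_two_mul_sub_le (m : ℤ) {n : ℤ} (hn : 0 < n) :
    ∃ k : ℤ, |2 * (m - n * k)| ≤ n := by
  have hmod := Int.emod_add_mul_ediv (2 * m + n) (2 * n)
  have hmod_nonneg := Int.emod_nonneg (2 * m + n) (show 2 * n ≠ 0 by omega)
  have hmod_lt := Int.emod_lt_of_pos (2 * m + n) (show 0 < 2 * n by omega)
  exact ⟨(2 * m + n) / (2 * n), abs_le.2 ⟨by linarith, by linarith⟩⟩

theorem exists_norm_sub_intCast_mul_lt (hD : -12 < b ^ 2 + 4 * a) (x : QuadraticAlgebra ℤ a b)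
    {n : ℤ} (hn : 0 < n) : ∃ q : QuadraticAlgebra ℤ a b, (x - n * q).norm < n ^ 2 := by
  obtain ⟨v, hv⟩ := exists_abs_two_mul_sub_le x.im hn
  obtain ⟨u, hu⟩ := exists_abs_two_mul_sub_le (2 * x.re + b * (x.im - n * v))
    (show 0 < 2 * n by omega)
  refine ⟨⟨u, v⟩, ?_⟩
  have hnorm : 4 * (x - (n : QuadraticAlgebra ℤ a b) * ⟨u, v⟩).norm =
      (2 * x.re + b * (x.im - n * v) - 2 * n * u) ^ 2 - (b ^ 2 + 4 * a) * (x.im - n * v) ^ 2 := by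
    rw [four_mul_norm]
    simp only [re_sub, im_sub, re_mul, im_mul, re_intCast, im_intCast, Int.cast_id]
    ring
  have hv2 := sq_le_sq' (abs_le.1 hv).1 (abs_le.1 hv).2
  have hu2 := sq_le_sq' (abs_le.1 hu).1 (abs_le.1 hu).2
  have hdisc := mul_nonneg (show 0 ≤ b ^ 2 + 4 * a + 11 by omega) (sq_nonneg (x.im - n * v))
  linarith [pow_pos hn 2]

theorem exists_norm_sub_mul_lt (hD : b ^ 2 + 4 * a < 0) (hD' : -12 < b ^ 2 + 4 * a)
    (x : QuadraticAlgebra ℤ a b) {y : QuadraticAlgebra ℤ a b} (hy : y ≠ 0) :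
    ∃ q, (x - y * q).norm < y.norm := by
  obtain ⟨q, hq⟩ := exists_norm_sub_intCast_mul_lt hD' (x * star y) (norm_pos hD hy)
  refine ⟨q, lt_of_mul_lt_mul_right ?_ (norm_nonneg hD y)⟩
  calc (x - y * q).norm * y.norm = (x * star y - y.norm * q).norm := by
        rw [norm_eq_mul_star, ← norm_star y, ← map_mul]
        congr 1
        ring
    _ < y.norm ^ 2 := hq
    _ = y.norm * y.norm := sq _

theorem isPrincipalIdealRing (hD : b ^ 2 + 4 * a < 0) (hD' : -12 < b ^ 2 + 4 * a) :
    IsPrincipalIdealRing (QuadraticAlgebra ℤ a b) := by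
  classical
  have := isDomain hD
  choose! quot hquot using fun x y ↦ exists_norm_sub_mul_lt hD hD' (x := x) (y := y)
  let : EuclideanDomain (QuadraticAlgebra ℤ a b) :=
    { (inferInstance : CommRing (QuadraticAlgebra ℤ a b)),
      (inferInstance : Nontrivial (QuadraticAlgebra ℤ a b)) with
      quotient x y := if y = 0 then 0 else quot x y
      remainder x y := x - y * if y = 0 then 0 else quot x y
      quotient_zero x := if_pos rfl
      quotient_mul_add_remainder_eq x y := by ring
      r x y := x.norm.natAbs < y.norm.natAbs
      r_wellFounded := (measure fun x : QuadraticAlgebra ℤ a b ↦ x.norm.natAbs).wf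
      remainder_lt x y hy := by
        rw [if_neg hy]
        exact Int.natAbs_lt_natAbs_of_nonneg_of_lt (norm_nonneg hD _) (hquot x y hy)
      mul_left_not_lt x y hy := by
        rw [map_mul, Int.natAbs_mul, not_lt]
        exact Nat.le_mul_of_pos_right _ (Int.natAbs_pos.2 (norm_pos hD hy).ne') }
  infer_instance

theorem prime_of_norm_prime (hD : b ^ 2 + 4 * a < 0) (hD' : -12 < b ^ 2 + 4 * a)
    {z : QuadraticAlgebra ℤ a b} (hz : Prime z.norm) : Prime z := by
  have := isDomain hD
  have := isPrincipalIdealRing hD hD'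
  refine Irreducible.prime ⟨fun hunit ↦ hz.not_isUnit (isUnit_iff_norm_isUnit.1 hunit), ?_⟩
  rintro x y rfl
  rw [map_mul] at hz
  simpa only [isUnit_iff_norm_isUnit] using hz.irreducible.isUnit_or_isUnit rfl

theorem exists_norm_eq_of_prime_dvd_norm (hD : b ^ 2 + 4 * a < 0) (hD' : -12 < b ^ 2 + 4 * a)
    {p : ℕ} (hp : p.Prime) {z : QuadraticAlgebra ℤ a b} (hz : (p : ℤ) ∣ z.norm)
    (hpz : ¬ (p : QuadraticAlgebra ℤ a b) ∣ z) : ∃ x : QuadraticAlgebra ℤ a b, x.norm = p := by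
  have := isDomain hD
  have := isPrincipalIdealRing hD hD'
  have hpnorm : (p : QuadraticAlgebra ℤ a b).norm = p ^ 2 := norm_natCast p
  have hunit : ¬ IsUnit (p : QuadraticAlgebra ℤ a b) := by
    rw [isUnit_iff_norm_isUnit, hpnorm, isUnit_pow_iff two_ne_zero]
    exact (Nat.prime_iff_prime_int.1 hp).not_isUnit
  have hred : ¬ Irreducible (p : QuadraticAlgebra ℤ a b) := by
    intro hirr
    have hdvd : (p : QuadraticAlgebra ℤ a b) ∣ z * star z := by
      rw [← norm_eq_mul_star, ← Int.cast_natCast]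
      exact Int.cast_dvd_cast _ _ hz
    refine (hirr.prime.dvd_or_dvd hdvd).elim hpz fun hstar ↦ hpz ?_
    simpa only [starRingEnd_apply, star_star, map_natCast] using
      map_dvd (starRingEnd (QuadraticAlgebra ℤ a b)) hstar
  simp only [irreducible_iff, hunit, not_false_eq_true, true_and, not_forall, not_or] at hred
  obtain ⟨x, y, hxy, hx, hy⟩ := hred
  have hnorm : x.norm.natAbs * y.norm.natAbs = p ^ 2 := by
    rw [← Int.natAbs_mul, ← map_mul, ← hxy, hpnorm, Int.natAbs_pow, Int.natAbs_natCast]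
  rw [isUnit_iff_norm_isUnit, Int.isUnit_iff_natAbs_eq] at hx hy
  have hxp := ((Nat.Prime.mul_eq_prime_sq_iff hp hx hy).1 hnorm).1
  exact ⟨x, by rw [← Int.natAbs_of_nonneg (norm_nonneg hD x), hxp]⟩

end Norm

theorem exists_eq_sq_add_mul_add_three_mul_sq {p : ℕ} (hp : p.Prime) (hp2 : p ≠ 2) {r : ℤ}
    (hr : (p : ℤ) ∣ r ^ 2 + 11) : ∃ x y : ℤ, (p : ℤ) = x ^ 2 + x * y + 3 * y ^ 2 := by
  let z : QuadraticAlgebra ℤ (-3) 1 := ⟨r - 1, 2⟩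
  have hz : z.norm = r ^ 2 + 11 := by
    simp only [norm_def, z]
    ring
  have hpz : ¬ (p : QuadraticAlgebra ℤ (-3) 1) ∣ z := by
    rintro ⟨w, hw⟩
    have him : (2 : ℤ) = p * w.im := by simpa [z] using congrArg QuadraticAlgebra.im hw
    have hdvd : p ∣ 2 := Int.natCast_dvd_natCast.1 ⟨w.im, by exact_mod_cast him⟩
    exact hp2 ((Nat.prime_dvd_prime_iff_eq hp Nat.prime_two).1 hdvd)
  obtain ⟨x, hx⟩ := exists_norm_eq_of_prime_dvd_norm (by norm_num) (by norm_num) hp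
    (hz ▸ hr) hpz
  exact ⟨x.re, x.im, by rw [← hx, norm_def]; ring⟩

end ImaginaryQuadratic

/-- The Eisenstein integers `ℤ[ω]`, where `ω ^ 2 = -1 - ω`. -/
abbrev EisensteinInt := QuadraticAlgebra ℤ (-1) (-1)

namespace EisensteinInt

instance : IsDomain EisensteinInt := ImaginaryQuadratic.isDomain (by norm_num)

theorem norm_eq (z : EisensteinInt) : z.norm = z.re ^ 2 - z.re * z.im + z.im ^ 2 := by
  rw [norm_def]
  ring

theorem omega_sq_add_omega_add_one : (ω : EisensteinInt) ^ 2 + ω + 1 = 0 := by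
  rw [sq]
  ext <;> rfl

theorem isPrimitiveRoot_omega : IsPrimitiveRoot (ω : EisensteinInt) 3 := by
  rw [← Polynomial.isRoot_cyclotomic_iff, Polynomial.cyclotomic_three]
  simpa using omega_sq_add_omega_add_one

theorem mul_star_eq_one_of_pow_three {ζ : EisensteinInt} (hζ : ζ ^ 3 = 1) : ζ * star ζ = 1 := by
  have hnorm : ζ.norm ^ 3 = 1 := by rw [← map_pow, hζ, map_one]
  rw [← ImaginaryQuadratic.norm_eq_mul_star,
    (pow_eq_one_iff_of_nonneg (ImaginaryQuadratic.norm_nonneg (by norm_num) ζ)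
      three_ne_zero).1 hnorm, Int.cast_one]

theorem natCast_dvd_iff {q : ℕ} {z : EisensteinInt} :
    (q : EisensteinInt) ∣ z ↔ (q : ℤ) ∣ z.re ∧ (q : ℤ) ∣ z.im := by
  constructor
  · rintro ⟨w, rfl⟩
    simp
  · rintro ⟨⟨x, hx⟩, ⟨y, hy⟩⟩
    exact ⟨⟨x, y⟩, by ext <;> simp [hx, hy]⟩

section RingHom

variable {R : Type*} [CommRing R]

theorem map_eq_add (h : EisensteinInt →+* R) (z : EisensteinInt) :
    h z = z.re + z.im * h ω := by
  have hz : z = z.re + z.im * (ω : EisensteinInt) := by ext <;> simp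
  conv_lhs => rw [hz, map_add, map_mul, map_intCast, map_intCast]

theorem map_omega_sq_add (h : EisensteinInt →+* R) : h ω ^ 2 + h ω + 1 = 0 := by
  simpa using congrArg h omega_sq_add_omega_add_one

theorem map_eq_one_iff_of_pow_three (h3 : (3 : R) ≠ 0) (h : EisensteinInt →+* R)
    {ζ : EisensteinInt} (hζ : ζ ^ 3 = 1) : h ζ = 1 ↔ ζ = 1 := by
  refine ⟨fun hh ↦ ?_, fun hζ1 ↦ hζ1 ▸ map_one h⟩
  have hfactor : (ζ - 1) * (ζ ^ 2 + ζ + 1) = 0 := by linear_combination hζ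
  refine sub_eq_zero.1 ((mul_eq_zero.1 hfactor).resolve_right fun hquad ↦ h3 ?_)
  have hmap := congrArg h hquad
  rw [map_add, map_add, map_pow, map_one, map_zero, hh] at hmap
  linear_combination hmap

end RingHom

section AlgebraicallyClosed

variable {K : Type*} [Field K] [IsAlgClosed K]

variable (K) in
theorem nonempty_ringHom : Nonempty (EisensteinInt →+* K) := by
  obtain ⟨t, ht⟩ := IsAlgClosed.exists_root (Polynomial.cyclotomic 3 K)
    (Polynomial.degree_cyclotomic_pos 3 K (by norm_num)).ne'
  rw [Polynomial.cyclotomic_three] at ht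
  have ht' : t * t = (-1 : ℤ) • 1 + (-1 : ℤ) • t := by
    simp only [Polynomial.IsRoot.def, Polynomial.eval_add, Polynomial.eval_pow,
      Polynomial.eval_X, Polynomial.eval_one] at ht
    simp only [neg_smul, one_smul]
    linear_combination ht
  exact ⟨(lift ⟨t, ht'⟩ : EisensteinInt →ₐ[ℤ] K).toRingHom⟩

theorem natCast_dvd_of_forall_map_eq_zero {q : ℕ} [CharP K q] (h3 : (3 : K) ≠ 0)
    {z : EisensteinInt} (hz : ∀ h : EisensteinInt →+* K, h z = 0) : (q : EisensteinInt) ∣ z := by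
  obtain ⟨h⟩ := nonempty_ringHom K
  have hω := map_omega_sq_add h
  have hroot : (2 * h ω + 1 : K) ≠ 0 := fun hroot ↦
    h3 (by linear_combination 4 * hω - (2 * h ω + 1) * hroot)
  have hz1 : (z.re : K) + z.im * h ω = 0 := by rw [← map_eq_add, hz]
  have hz2 : (z.re : K) - z.im - z.im * h ω = 0 := by
    have := hz (h.comp (starRingEnd EisensteinInt))
    rw [RingHom.comp_apply, starRingEnd_apply, map_eq_add, re_star, im_star] at this
    push_cast at this
    linear_combination this
  have him : (z.im : K) = 0 :=
    (mul_eq_zero.1 (by linear_combination hz1 - hz2 :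
      (z.im : K) * (2 * h ω + 1) = 0)).resolve_right hroot
  have hre : (z.re : K) = 0 := by linear_combination hz1 - h ω * him
  rw [natCast_dvd_iff]
  exact ⟨(CharP.intCast_eq_zero_iff K q _).1 hre, (CharP.intCast_eq_zero_iff K q _).1 him⟩

end AlgebraicallyClosed

/-- The multiplicative map `C ↦ C ^ 2 * star C = norm C * C`. It sends a Jacobi sum `J(χ, χ)` of a
cubic character `χ` of a prime field to the cube of the Gauss sum of `χ`. -/
def gaussCube : EisensteinInt →* EisensteinInt :=
  MonoidHom.id _ ^ 2 * (starRingEnd EisensteinInt : EisensteinInt →* EisensteinInt)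

theorem gaussCube_apply (C : EisensteinInt) : gaussCube C = C ^ 2 * star C := rfl

theorem gaussCube_eq_norm_mul (C : EisensteinInt) : gaussCube C = C.norm * C := by
  rw [gaussCube_apply, ImaginaryQuadratic.norm_eq_mul_star]
  ring

theorem three_dvd_sq_sub_one {q : ℕ} (hq : ¬ 3 ∣ q) : 3 ∣ q ^ 2 - 1 := by
  have hmod : q ^ 2 % 3 = 1 := by
    rcases (by omega : q % 3 = 1 ∨ q % 3 = 2) with h | h <;> simp [Nat.pow_mod, h]
  omega

theorem prime_dvd_pow_sq_sub_one_sub_one {q : ℕ} (hq : q.Prime) {m : ℤ} (hm : ¬ (q : ℤ) ∣ m) :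
    (q : ℤ) ∣ m ^ (q ^ 2 - 1) - 1 := by
  have hcop : IsCoprime m q := ((Nat.prime_iff_prime_int.1 hq).coprime_iff_not_dvd.2 hm).symm
  have hfermat := (Int.ModEq.pow_card_sub_one_eq_one hq hcop).pow (q + 1)
  rw [one_pow, ← pow_mul, mul_comm, ← Nat.sq_sub_sq, one_pow] at hfermat
  exact hfermat.symm.dvd

theorem dvd_pow_three_pow_sub_one {q : ℕ} (hq : q.Prime) (hq3 : q ≠ 3) {m : ℤ}
    (hm : ¬ (q : ℤ) ∣ m) :
    (q : EisensteinInt) ∣ ((m : EisensteinInt) ^ 3) ^ ((q ^ 2 - 1) / 3) - 1 := by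
  have h3 : ¬ 3 ∣ q := fun h ↦ hq3 ((Nat.prime_dvd_prime_iff_eq Nat.prime_three hq).1 h).symm
  rw [← pow_mul, Nat.mul_div_cancel' (three_dvd_sq_sub_one h3)]
  exact_mod_cast Int.cast_dvd_cast (α := EisensteinInt) _ _ (prime_dvd_pow_sq_sub_one_sub_one hq hm)

theorem eq_one_of_natCast_dvd_sub_one {q : ℕ} (hq : ¬ q ∣ 3) {ζ : EisensteinInt} (hζ : ζ ^ 3 = 1)
    (hdvd : (q : EisensteinInt) ∣ ζ - 1) : ζ = 1 := by
  have h3 : (3 : EisensteinInt ⧸ Ideal.span {(q : EisensteinInt)}) ≠ 0 := by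
    rw [← map_ofNat (Ideal.Quotient.mk _), Ne, Ideal.Quotient.eq_zero_iff_dvd, natCast_dvd_iff]
    exact fun h ↦ hq (Int.natCast_dvd_natCast.1 h.1)
  rw [← map_eq_one_iff_of_pow_three h3 (Ideal.Quotient.mk _) hζ, ← map_one (Ideal.Quotient.mk _)]
  exact (Ideal.Quotient.mk_eq_mk_iff_sub_mem _ _).2 (Ideal.mem_span_singleton.2 hdvd)

/-- The Dirichlet character `χ` is the rational cubic residue symbol `q ↦ (C / q)₃`, extended from
primes `q` by multiplicativity. Replacing `C` by `gaussCube C` makes the exponent the same for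
inert and split `q`: if `q = π * star π`, then `(C ^ 2 * star C) ^ ((q ^ 2 - 1) / 3)` reduces modulo
`π` to `((C / π)₃ ^ 2 * (star C / π)₃) ^ (q + 1) = (C / π)₃ * (C / star π)₃`. -/
structure IsCubicResidueChar {n : ℕ} (C : EisensteinInt)
    (χ : DirichletCharacter EisensteinInt n) : Prop where
  pow_three : χ ^ 3 = 1
  dvd : ∀ q : ℕ, q.Prime → q ≠ 3 → q.Coprime n →
    (q : EisensteinInt) ∣ gaussCube C ^ ((q ^ 2 - 1) / 3) - χ q

namespace IsCubicResidueChar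

variable {m n : ℕ} {C D : EisensteinInt} {χ ψ : DirichletCharacter EisensteinInt n}

theorem changeLevel (hχ : IsCubicResidueChar C χ) (hnm : n ∣ m) :
    IsCubicResidueChar C (χ.changeLevel hnm) where
  pow_three := by rw [← map_pow, hχ.pow_three, map_one]
  dvd q hq hq3 hqm := by
    have hcast := DirichletCharacter.changeLevel_eq_cast_of_dvd χ hnm (ZMod.unitOfCoprime q hqm)
    rw [ZMod.coe_unitOfCoprime, ZMod.cast_natCast hnm] at hcast
    rw [hcast]
    exact hχ.dvd q hq hq3 (hqm.coprime_dvd_right hnm)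

theorem mul (hχ : IsCubicResidueChar C χ) (hψ : IsCubicResidueChar D ψ) :
    IsCubicResidueChar (C * D) (χ * ψ) where
  pow_three := by rw [mul_pow, hχ.pow_three, hψ.pow_three, one_mul]
  dvd q hq hq3 hqn := by
    rw [map_mul, mul_pow, MulChar.mul_apply]
    exact dvd_mul_sub_mul (hχ.dvd q hq hq3 hqn) (hψ.dvd q hq hq3 hqn)

theorem star (hχ : IsCubicResidueChar C χ) :
    IsCubicResidueChar (star C) (χ.ringHomComp (starRingEnd EisensteinInt)) where
  pow_three := by rw [MulChar.ringHomComp_pow, hχ.pow_three, MulChar.ringHomComp_one]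
  dvd q hq hq3 hqn := by
    simpa [gaussCube_apply, starRingEnd_apply] using
      map_dvd (starRingEnd EisensteinInt) (hχ.dvd q hq hq3 hqn)

theorem intCast (m : ℤ) : IsCubicResidueChar (m : EisensteinInt)
    (1 : DirichletCharacter EisensteinInt (m : EisensteinInt).norm.natAbs) where
  pow_three := one_pow 3
  dvd q hq hq3 hqm := by
    have hqm' : ¬ (q : ℤ) ∣ m := by
      rw [Int.natCast_dvd, ← hq.coprime_iff_not_dvd]
      rw [QuadraticAlgebra.norm_intCast, Int.natAbs_pow] at hqm
      exact (Nat.coprime_pow_right_iff two_pos q _).1 hqm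
    have hcube : gaussCube (m : EisensteinInt) = (m : EisensteinInt) ^ 3 := by
      simp [gaussCube_apply, pow_succ]
    rw [MulChar.one_apply ((ZMod.isUnit_iff_coprime q _).2 hqm), hcube]
    exact dvd_pow_three_pow_sub_one hq hq3 hqm'

theorem apply_pow_three (hχ : IsCubicResidueChar C χ) {q : ℕ} (hqn : q.Coprime n) :
    χ q ^ 3 = 1 := by
  rw [← MulChar.pow_apply' χ three_ne_zero, hχ.pow_three,
    MulChar.one_apply ((ZMod.isUnit_iff_coprime q n).2 hqn)]

theorem eq_one_of_dvd_mul_sub (hχ : IsCubicResidueChar C χ) {q : ℕ} (hq : q.Prime) (hq3 : q ≠ 3)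
    (hqn : q.Coprime n) {k m : ℤ} (hk : ¬ (q : ℤ) ∣ k) (hm : ¬ (q : ℤ) ∣ m)
    (hC : (q : EisensteinInt) ∣ k * C - m) : χ q = 1 := by
  set N := (q ^ 2 - 1) / 3
  have hstar : (q : EisensteinInt) ∣ k * Star.star C - m := by
    simpa [starRingEnd_apply] using map_dvd (starRingEnd EisensteinInt) hC
  have hcube : (q : EisensteinInt) ∣ (k ^ 3 * gaussCube C) - m ^ 3 := by
    have h := dvd_mul_sub_mul (dvd_mul_sub_mul hC hC) hstar
    rw [gaussCube_apply]
    convert h using 1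
    ring
  have hpow : (q : EisensteinInt) ∣ gaussCube C ^ N - 1 := by
    have h := dvd_add (dvd_sub (hcube.trans (sub_dvd_pow_sub_pow _ _ N))
      ((dvd_pow_three_pow_sub_one hq hq3 hk).mul_left (gaussCube C ^ N)))
      (dvd_pow_three_pow_sub_one hq hq3 hm)
    convert h using 1
    rw [mul_pow]
    ring
  refine eq_one_of_natCast_dvd_sub_one (q := q) ?_ (hχ.apply_pow_three hqn) ?_
  · exact fun h ↦ hq3 ((Nat.prime_dvd_prime_iff_eq hq Nat.prime_three).1 h)
  · convert dvd_sub hpow (hχ.dvd q hq hq3 hqn) using 1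
    ring

end IsCubicResidueChar

section GaussSum

theorem gaussSum_pow_sq {R R' : Type*} [CommRing R] [Fintype R] [CommRing R'] {q : ℕ}
    [Fact q.Prime] [CharP R' q] (hq3 : ¬ 3 ∣ q) (hq : IsUnit (q : R)) {χ : MulChar R R'}
    (hχ : χ ^ 3 = 1) (ψ : AddChar R R') :
    gaussSum χ ψ ^ q ^ 2 = χ q * gaussSum χ ψ := by
  obtain ⟨u, hu⟩ := hq
  have hχq : χ ^ q ^ 2 = χ := by
    obtain ⟨k, hk⟩ := three_dvd_sq_sub_one hq3
    rw [← Nat.sub_add_cancel (Nat.one_le_pow 2 q (Nat.Prime.pos Fact.out)), hk, pow_succ, pow_mul,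
      hχ, one_pow, one_mul]
  have hfrob : gaussSum χ ψ ^ q ^ 2 = gaussSum χ (ψ.mulShift (q ^ 2)) := by
    rw [sq, pow_mul, gaussSum_frob, gaussSum_frob, ← pow_mul, ← pow_mul, ← sq, hχq,
      AddChar.pow_mulShift, Nat.cast_pow]
  have hshift := gaussSum_mulShift χ ψ (u ^ 2)
  have hcube : χ u ^ 3 = 1 := by rw [← MulChar.pow_apply_coe, hχ, MulChar.one_apply_coe]
  rw [Units.val_pow_eq_pow_val, map_pow, hu, ← hfrob] at hshift
  rw [hu] at hcube
  linear_combination χ q * hshift - gaussSum χ ψ ^ q ^ 2 * hcube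

theorem ringHomComp_starRingEnd {R : Type*} [CommRing R] {χ : MulChar R EisensteinInt}
    (hχ : χ ^ 3 = 1) :
    χ.ringHomComp (starRingEnd EisensteinInt) = χ⁻¹ := by
  refine eq_inv_of_mul_eq_one_right (MulChar.ext fun u ↦ ?_)
  rw [MulChar.mul_apply, MulChar.ringHomComp_apply, MulChar.one_apply_coe, starRingEnd_apply]
  exact mul_star_eq_one_of_pow_three (by rw [← MulChar.pow_apply_coe, hχ, MulChar.one_apply_coe])

theorem ringHomComp_ne_one {R K : Type*} [CommRing R] [CommRing K] (h3 : (3 : K) ≠ 0)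
    (h : EisensteinInt →+* K) {χ : MulChar R EisensteinInt} (hχ : χ ^ 3 = 1) (hχ1 : χ ≠ 1) :
    χ.ringHomComp h ≠ 1 := by
  refine mt (fun hh ↦ MulChar.ext fun u ↦ ?_) hχ1
  have hcube : χ u ^ 3 = 1 := by rw [← MulChar.pow_apply_coe, hχ, MulChar.one_apply_coe]
  rw [MulChar.one_apply_coe, ← map_eq_one_iff_of_pow_three h3 h hcube, ← MulChar.ringHomComp_apply,
    hh, MulChar.one_apply_coe]

variable {F : Type*} [Field F] [Fintype F]

theorem gaussSum_pow_three {K : Type*} [Field K] {χ : MulChar F K} (hχ : χ ^ 3 = 1) (hχ1 : χ ≠ 1)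
    {ψ : AddChar F K} (hψ : ψ.IsPrimitive) :
    gaussSum χ ψ ^ 3 = Fintype.card F * jacobiSum χ χ := by
  have horder : orderOf χ = 3 := orderOf_eq_prime hχ hχ1
  have hneg : χ (-1) = 1 := by
    have hcube : χ (-1) ^ 3 = 1 := by
      rw [← MulChar.pow_apply' χ three_ne_zero, hχ, MulChar.one_apply isUnit_one.neg]
    rwa [← map_pow, Odd.neg_one_pow (by decide)] at hcube
  have hgauss := gaussSum_pow_eq_prod_jacobiSum (horder.ge.trans' (Nat.le_succ 2)) hψ
  simpa only [horder, hneg, one_mul, Nat.reduceSub, Nat.Ico_succ_singleton, Finset.prod_singleton,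
    pow_one] using hgauss

variable {χ : MulChar F EisensteinInt}

theorem jacobiSum_mul_star (hχ : χ ^ 3 = 1) (hχ1 : χ ≠ 1) :
    jacobiSum χ χ * star (jacobiSum χ χ) = Fintype.card F := by
  have hinj := IsFractionRing.injective EisensteinInt (FractionRing EisensteinInt)
  have hchar : ringChar (FractionRing EisensteinInt) ≠ ringChar F := by
    rw [ringChar.eq_zero]
    exact (CharP.ringChar_ne_zero_of_finite F).symm
  have hχ2 : χ * χ ≠ 1 := fun h ↦ hχ1 (by rw [← hχ, pow_succ, sq, h, one_mul])
  have hK := jacobiSum_mul_jacobiSum_inv hchar ((MulChar.ringHomComp_ne_one_iff hinj).2 hχ1)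
    ((MulChar.ringHomComp_ne_one_iff hinj).2 hχ1)
    (by rwa [← MulChar.ringHomComp_mul, MulChar.ringHomComp_ne_one_iff hinj])
  rw [MulChar.ringHomComp_inv, jacobiSum_ringHomComp, jacobiSum_ringHomComp, ← map_mul,
    ← ringHomComp_starRingEnd hχ, jacobiSum_ringHomComp, starRingEnd_apply] at hK
  exact hinj (by rw [hK, map_natCast])

theorem norm_jacobiSum (hχ : χ ^ 3 = 1) (hχ1 : χ ≠ 1) :
    (jacobiSum χ χ).norm = Fintype.card F := by
  have hmul := jacobiSum_mul_star hχ hχ1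
  rw [← ImaginaryQuadratic.norm_eq_mul_star] at hmul
  exact_mod_cast hmul

theorem map_gaussCube_jacobiSum {K : Type*} [Field K] (h3 : (3 : K) ≠ 0) (h : EisensteinInt →+* K)
    (hχ : χ ^ 3 = 1) (hχ1 : χ ≠ 1) {ψ : AddChar F K} (hψ : ψ.IsPrimitive) :
    h (gaussCube (jacobiSum χ χ)) = gaussSum (χ.ringHomComp h) ψ ^ 3 := by
  rw [gaussSum_pow_three (by rw [MulChar.ringHomComp_pow, hχ, MulChar.ringHomComp_one])
    (ringHomComp_ne_one h3 h hχ hχ1) hψ, jacobiSum_ringHomComp, gaussCube_eq_norm_mul,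
    norm_jacobiSum hχ hχ1, Int.cast_natCast, map_mul, map_natCast]

theorem isCubicResidueChar_jacobiSum {l : ℕ} [Fact l.Prime]
    {χ : DirichletCharacter EisensteinInt l} (hχ : χ ^ 3 = 1) (hχ1 : χ ≠ 1) :
    IsCubicResidueChar (jacobiSum χ χ) χ where
  pow_three := hχ
  dvd q hq hq3 hql := by
    have : Fact q.Prime := ⟨hq⟩
    let K := AlgebraicClosure (ZMod q)
    have hcast : ∀ r : ℕ, q.Coprime r → (r : K) ≠ 0 := fun r hr h0 ↦
      hq.coprime_iff_not_dvd.1 hr ((CharP.cast_eq_zero_iff K q r).1 h0)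
    have h3 : (3 : K) ≠ 0 := mod_cast hcast 3 ((Nat.coprime_primes hq Nat.prime_three).2 hq3)
    have hl : (l : K) ≠ 0 := hcast l hql
    have : NeZero (l : K) := ⟨hl⟩
    obtain ⟨ζ, hζ⟩ := HasEnoughRootsOfUnity.exists_primitiveRoot K l
    have hψ := AddChar.zmodChar_primitive_of_primitive_root l hζ
    set ψ := AddChar.zmodChar l ((IsPrimitiveRoot.iff_def ζ l).mp hζ).left
    refine natCast_dvd_of_forall_map_eq_zero h3 fun h ↦ ?_
    have hg : gaussSum (χ.ringHomComp h) ψ ≠ 0 :=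
      gaussSum_ne_zero_of_nontrivial (by rwa [ZMod.card]) (ringHomComp_ne_one h3 h hχ hχ1) hψ
    have hq3' : ¬ 3 ∣ q := fun hdvd ↦
      hq3 ((Nat.prime_dvd_prime_iff_eq Nat.prime_three hq).1 hdvd).symm
    have hfrob := gaussSum_pow_sq hq3' ((ZMod.isUnit_iff_coprime q l).2 hql)
      (by rw [MulChar.ringHomComp_pow, hχ, MulChar.ringHomComp_one] : χ.ringHomComp h ^ 3 = 1) ψ
    rw [← Nat.sub_add_cancel (Nat.one_le_pow 2 q hq.pos), pow_succ, mul_left_inj' hg] at hfrob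
    rw [map_sub, map_pow, map_gaussCube_jacobiSum h3 h hχ hχ1 hψ, ← pow_mul,
      Nat.mul_div_cancel' (three_dvd_sq_sub_one hq3'), hfrob, MulChar.ringHomComp_apply, sub_self]

end GaussSum

theorem norm_emod_three {z : EisensteinInt} (hz : ¬ 3 ∣ z.norm) : z.norm % 3 = 1 := by
  have hnorm : z.norm = (z.re + z.im) ^ 2 + 3 * -(z.re * z.im) := by
    rw [norm_eq]
    ring
  rw [hnorm, Int.add_mul_emod_self_left]
  rw [hnorm, dvd_add_left (dvd_mul_right _ _), Int.prime_three.dvd_pow_iff_dvd two_ne_zero] at hz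
  rcases (by omega : (z.re + z.im) % 3 = 1 ∨ (z.re + z.im) % 3 = 2) with h | h <;>
    simp [sq, Int.mul_emod, h]

/-- The Eisenstein integer `z` is congruent to `1` or `-1` modulo `3`. Every Eisenstein integer not
divisible by `1 - ω` has such an associate. -/
def IsPrimary (z : EisensteinInt) : Prop := ¬ 3 ∣ z.re ∧ 3 ∣ z.im

namespace IsPrimary

variable {z w : EisensteinInt}

theorem star (hz : IsPrimary z) : IsPrimary (star z) := by
  have hre := hz.1
  have him := hz.2
  constructor <;> simp only [re_star, im_star] <;> omega

theorem not_three_dvd_norm (hz : IsPrimary z) : ¬ 3 ∣ z.norm := by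
  have hnorm : z.norm = z.re ^ 2 - z.im * (z.re - z.im) := by
    rw [norm_eq]
    ring
  rw [hnorm, dvd_sub_left (hz.2.mul_right _), Int.prime_three.dvd_pow_iff_dvd two_ne_zero]
  exact hz.1

theorem of_mul_left (hz : IsPrimary z) (hzw : IsPrimary (z * w)) : IsPrimary w := by
  obtain ⟨hre, him⟩ := hzw
  simp only [re_mul, im_mul] at hre him
  have him' : 3 ∣ w.im := by
    refine (Int.prime_three.dvd_or_dvd (?_ : 3 ∣ z.re * w.im)).resolve_left hz.1
    obtain ⟨k, hk⟩ := hz.2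
    obtain ⟨m, hm⟩ := him
    exact ⟨m - k * w.re + k * w.im, by rw [hk] at hm; linear_combination hm⟩
  refine ⟨fun hw ↦ hre ?_, him'⟩
  exact dvd_add (hw.mul_left _) (him'.mul_left _)

theorem exists_eq_intCast_of_norm_eq_one (hz : IsPrimary z) (hnorm : z.norm = 1) :
    ∃ m : ℤ, z = m := by
  obtain ⟨k, hk⟩ := hz.2
  have hfour := ImaginaryQuadratic.four_mul_norm z
  rw [hnorm, hk] at hfour
  have hk0 : k = 0 := by
    by_contra hk0
    nlinarith [sq_nonneg (2 * z.re + -1 * (3 * k)), sq_pos_of_ne_zero hk0]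
  exact ⟨z.re, by ext <;> simp [hk, hk0]⟩

theorem intCast {m : ℤ} (hm : ¬ 3 ∣ m) : IsPrimary (m : EisensteinInt) :=
  ⟨by rwa [re_intCast, Int.cast_id], by simp only [im_intCast, dvd_zero]⟩

end IsPrimary

theorem isPrimary_jacobiSum {F : Type*} [Field F] [Fintype F] {χ : MulChar F EisensteinInt}
    (hχ : χ ^ 3 = 1) (hF : 3 ∣ Fintype.card F - 1) : IsPrimary (jacobiSum χ χ) := by
  obtain ⟨z, -, hz⟩ :=
    exists_jacobiSum_eq_neg_one_add (by norm_num) hχ hχ hF isPrimitiveRoot_omega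
  have homega : ((ω : EisensteinInt) - 1) ^ 2 = -3 * ω := by
    linear_combination omega_sq_add_omega_add_one
  have hJ : jacobiSum χ χ = -1 + ((3 : ℤ) : EisensteinInt) * (-(z * ω)) := by
    rw [hz, homega]
    push_cast
    ring
  rw [hJ]
  constructor
  · simp
  · simp

theorem exists_isCubicResidueChar_of_emod_three {l : ℕ} (hl : l.Prime) (hl3 : l % 3 = 1) :
    ∃ J : EisensteinInt, J.norm = l ∧ IsPrimary J ∧
      ∃ χ : DirichletCharacter EisensteinInt l, IsCubicResidueChar J χ := by
  have : Fact l.Prime := ⟨hl⟩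
  have hdvd : 3 ∣ Fintype.card (ZMod l) - 1 := by
    rw [ZMod.card]
    omega
  obtain ⟨χ, horder⟩ := MulChar.exists_mulChar_orderOf (ZMod l) hdvd isPrimitiveRoot_omega
  have hχ : χ ^ 3 = 1 := horder ▸ pow_orderOf_eq_one χ
  have hχ1 : χ ≠ 1 := by
    rintro rfl
    simp at horder
  exact ⟨jacobiSum χ χ, by rw [norm_jacobiSum hχ hχ1, ZMod.card], isPrimary_jacobiSum hχ hdvd, χ,
    isCubicResidueChar_jacobiSum hχ hχ1⟩

theorem exists_dvd_norm_eq_isCubicResidueChar {C : EisensteinInt} {l : ℕ} (hl : l.Prime)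
    (hl3 : ¬ 3 ∣ l) (hlC : (l : ℤ) ∣ C.norm) (hdvd : ¬ (l : EisensteinInt) ∣ C) :
    ∃ D : EisensteinInt, D ∣ C ∧ D.norm = l ∧ IsPrimary D ∧
      ∃ χ : DirichletCharacter EisensteinInt l, IsCubicResidueChar D χ := by
  obtain ⟨α, hα⟩ := ImaginaryQuadratic.exists_norm_eq_of_prime_dvd_norm (by norm_num)
    (by norm_num) hl hlC hdvd
  have hl_mod : (l : ℤ) % 3 = 1 := hα ▸ norm_emod_three (z := α) (by omega)
  obtain ⟨J, hJ, hJprimary, χ, hχ⟩ := exists_isCubicResidueChar_of_emod_three hl (by omega)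
  have hJprime : Prime J := ImaginaryQuadratic.prime_of_norm_prime (by norm_num) (by norm_num)
    (hJ ▸ Nat.prime_iff_prime_int.1 hl)
  have hJC : J ∣ C * star C := by
    rw [← ImaginaryQuadratic.norm_eq_mul_star]
    exact (hJ ▸ ImaginaryQuadratic.dvd_norm J).trans (Int.cast_dvd_cast _ _ hlC)
  rcases hJprime.dvd_or_dvd hJC with hJC | hJC
  · exact ⟨J, hJC, hJ, hJprimary, χ, hχ⟩
  · refine ⟨star J, ?_, by rw [QuadraticAlgebra.norm_star, hJ], hJprimary.star, _, hχ.star⟩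
    simpa [starRingEnd_apply] using map_dvd (starRingEnd EisensteinInt) hJC

theorem IsPrimary.exists_dvd_isCubicResidueChar {C : EisensteinInt} (hC : IsPrimary C) {l : ℕ}
    (hl : l.Prime) (hlC : (l : ℤ) ∣ C.norm) :
    ∃ D : EisensteinInt, D ∣ C ∧ (l : ℤ) ∣ D.norm ∧ IsPrimary D ∧
      ∃ χ : DirichletCharacter EisensteinInt D.norm.natAbs, IsCubicResidueChar D χ := by
  have hl3 : ¬ 3 ∣ l := fun h3l ↦
    hC.not_three_dvd_norm ((Int.natCast_dvd_natCast.2 h3l).trans hlC)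
  by_cases hdvd : (l : EisensteinInt) ∣ C
  · refine ⟨(l : ℤ), by exact_mod_cast hdvd, ?_, .intCast (by exact_mod_cast hl3), 1, .intCast l⟩
    rw [QuadraticAlgebra.norm_intCast]
    exact dvd_pow_self _ two_ne_zero
  · obtain ⟨D, hDC, hD, hDprimary, χ, hχ⟩ :=
      exists_dvd_norm_eq_isCubicResidueChar hl hl3 hlC hdvd
    refine ⟨D, hDC, dvd_of_eq hD.symm, hDprimary, ?_⟩
    rw [hD, Int.natAbs_natCast]
    exact ⟨χ, hχ⟩

theorem IsPrimary.exists_isCubicResidueChar {C : EisensteinInt} (hC : IsPrimary C) :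
    ∃ χ : DirichletCharacter EisensteinInt C.norm.natAbs, IsCubicResidueChar C χ := by
  induction hn : C.norm.natAbs using Nat.strong_induction_on generalizing C with
  | _ n ih =>
  subst hn
  have hnonneg := ImaginaryQuadratic.norm_nonneg (by norm_num) C
  by_cases hC1 : C.norm = 1
  · obtain ⟨m, rfl⟩ := hC.exists_eq_intCast_of_norm_eq_one hC1
    exact ⟨1, .intCast m⟩
  obtain ⟨l, hl, hlC⟩ := Nat.exists_prime_and_dvd (by omega : C.norm.natAbs ≠ 1)
  obtain ⟨D, ⟨E, rfl⟩, hlD, hD, χ, hχ⟩ :=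
    hC.exists_dvd_isCubicResidueChar hl (Int.natCast_dvd.2 hlC)
  have hDE0 : (D * E).norm.natAbs ≠ 0 := by
    have := hC.not_three_dvd_norm
    omega
  have hnorm : (D * E).norm.natAbs = D.norm.natAbs * E.norm.natAbs := by
    rw [map_mul, Int.natAbs_mul]
  have hE0 : 0 < E.norm.natAbs := Nat.pos_of_ne_zero (right_ne_zero_of_mul (hnorm ▸ hDE0))
  have hD0 : D.norm.natAbs ≠ 0 := left_ne_zero_of_mul (hnorm ▸ hDE0)
  have hD1 : 1 < D.norm.natAbs :=
    hl.one_lt.trans_le (Nat.le_of_dvd (Nat.pos_of_ne_zero hD0) (Int.natCast_dvd.1 hlD))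
  obtain ⟨ψ, hψ⟩ := ih E.norm.natAbs (hnorm ▸ lt_mul_of_one_lt_left hE0 hD1)
    (hD.of_mul_left hC) rfl
  exact ⟨_, (hχ.changeLevel (hnorm ▸ dvd_mul_right _ _)).mul
    (hψ.changeLevel (hnorm ▸ dvd_mul_left _ _))⟩
end EisensteinInt

namespace Berstel

open EisensteinInt

theorem apply_natCast_eq_one_of_forall_prime {R : Type*} [CommRing R] {n : ℕ}
    (χ : DirichletCharacter R n) {N : ℕ} (hN : N ≠ 0)
    (hχ : ∀ q : ℕ, q.Prime → q ∣ N → χ q = 1) : χ N = 1 := by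
  rw [← Nat.prod_primeFactorsList hN, Nat.cast_list_prod, map_list_prod]
  refine List.prod_eq_one fun a ha ↦ ?_
  simp only [List.map_map, List.mem_map, Function.comp_apply] at ha
  obtain ⟨q, hq, rfl⟩ := ha
  exact hχ q (Nat.prime_of_mem_primeFactorsList hq) (Nat.dvd_of_mem_primeFactorsList hq)

/-- The Eisenstein integer `(13 * b + 3 * a * √-3) / 2` with `a = 8 * x - 7 * y` and
`b = 2 * x + 5 * y`. If `p = x ^ 2 + x * y + 3 * y ^ 2`, then `a ^ 2 + 11 * b ^ 2 = 108 * p`, so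
`a / b` is a square root of `-11` modulo `p` and the element is, modulo `p` and up to conjugation,
`b / 4` times the cube of a Lagrange resolvent of the characteristic polynomial. -/
def resolventCube (x y : ℤ) : EisensteinInt := ⟨25 * x + 22 * y, 24 * x - 21 * y⟩

theorem two_mul_resolventCube (x y : ℤ) : 2 * resolventCube x y =
    13 * (2 * (x : EisensteinInt) + 5 * (y : EisensteinInt)) +
      3 * (8 * (x : EisensteinInt) - 7 * (y : EisensteinInt)) * (2 * ω + 1) := by
  ext <;> simp [resolventCube] <;> ring

theorem dvd_four_mul_resolventCube_sq_sub (x y : ℤ) :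
    ((2 * x + 5 * y : ℤ) : EisensteinInt) ∣
      (4 : ℤ) * (resolventCube x y * resolventCube x y) - (-27 * (8 * x - 7 * y) ^ 2 : ℤ) := by
  refine ⟨169 * (2 * (x : EisensteinInt) + 5 * (y : EisensteinInt)) +
    78 * (8 * (x : EisensteinInt) - 7 * (y : EisensteinInt)) * (2 * ω + 1), ?_⟩
  push_cast
  linear_combination (2 * resolventCube x y +
    13 * (2 * (x : EisensteinInt) + 5 * (y : EisensteinInt)) +
    3 * (8 * (x : EisensteinInt) - 7 * (y : EisensteinInt)) * (2 * ω + 1)) *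
      two_mul_resolventCube x y +
    36 * (8 * (x : EisensteinInt) - 7 * (y : EisensteinInt)) ^ 2 * omega_sq_add_omega_add_one

theorem norm_resolventCube (x y : ℤ) :
    (resolventCube x y).norm = 729 * (x ^ 2 + x * y + 3 * y ^ 2) - 32 * (2 * x + 5 * y) ^ 2 := by
  rw [norm_eq, resolventCube]
  ring

variable {p : ℕ} {x y : ℤ}

theorem not_three_dvd_add (hp : p.Prime) (hp3 : p ≠ 3)
    (hxy : (p : ℤ) = x ^ 2 + x * y + 3 * y ^ 2) : ¬ 3 ∣ x + y := by
  intro h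
  have h3p : (3 : ℤ) ∣ p := by
    rw [hxy, show x ^ 2 + x * y + 3 * y ^ 2 = (x + y) * x + 3 * y ^ 2 by ring]
    exact dvd_add (h.mul_right _) (dvd_mul_right _ _)
  exact hp3 ((Nat.prime_dvd_prime_iff_eq Nat.prime_three hp).1 (by exact_mod_cast h3p)).symm

theorem not_dvd_two_mul_add_five_mul (hp : p.Prime) (hp2 : p ≠ 2) (hp3 : p ≠ 3)
    (hxy : (p : ℤ) = x ^ 2 + x * y + 3 * y ^ 2) : ¬ (p : ℤ) ∣ 2 * x + 5 * y := by
  have hpZ := Nat.prime_iff_prime_int.1 hp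
  have hnot : ∀ r : ℕ, r.Prime → p ≠ r → ¬ (p : ℤ) ∣ r := fun r hr hpr h ↦
    hpr ((Nat.prime_dvd_prime_iff_eq hp hr).1 (Int.natCast_dvd_natCast.1 h))
  rintro ⟨k, hk⟩
  have hy : (p : ℤ) ∣ y := by
    have h27 : (p : ℤ) ∣ 3 ^ 3 * y ^ 2 :=
      ⟨4 - (2 * x - 3 * y) * k, by linear_combination -4 * hxy - (2 * x - 3 * y) * hk⟩
    exact hpZ.dvd_of_dvd_pow ((hpZ.dvd_or_dvd h27).resolve_left fun h ↦
      hnot 3 Nat.prime_three hp3 (hpZ.dvd_of_dvd_pow h))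
  obtain ⟨m, rfl⟩ := hy
  have hx : (p : ℤ) ∣ x := by
    have h2x : (p : ℤ) ∣ 2 * x := ⟨k - 5 * m, by linear_combination hk⟩
    exact (hpZ.dvd_or_dvd h2x).resolve_left (hnot 2 Nat.prime_two hp2)
  obtain ⟨l, rfl⟩ := hx
  have hunit : (p : ℤ) * (l ^ 2 + l * m + 3 * m ^ 2) = 1 :=
    mul_left_cancel₀ hpZ.ne_zero (by linear_combination -hxy)
  exact hpZ.not_isUnit (IsUnit.of_mul_eq_one _ hunit)

theorem odd_norm_resolventCube (hp : p.Prime) (hp2 : p ≠ 2)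
    (hxy : (p : ℤ) = x ^ 2 + x * y + 3 * y ^ 2) : Odd (resolventCube x y).norm := by
  have hodd : Odd (p : ℤ) := by exact_mod_cast hp.odd_of_ne_two hp2
  rw [norm_resolventCube, ← hxy]
  exact ((by decide : Odd (729 : ℤ)).mul hodd).sub_even
    ((by decide : Even (32 : ℤ)).mul_right _)

theorem isPrimary_resolventCube (hxy : ¬ 3 ∣ x + y) : IsPrimary (resolventCube x y) := by
  constructor <;> simp only [resolventCube] <;> omega

theorem coprime_norm_resolventCube_of_dvd (hp : p.Prime) (hp2 : p ≠ 2) (hp3 : p ≠ 3)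
    (hxy : (p : ℤ) = x ^ 2 + x * y + 3 * y ^ 2) {q : ℕ} (hq : q.Prime)
    (hqb : (q : ℤ) ∣ 2 * x + 5 * y) : q.Coprime (resolventCube x y).norm.natAbs := by
  rw [hq.coprime_iff_not_dvd, ← Int.natCast_dvd, norm_resolventCube, ← hxy,
    dvd_sub_left ((hqb.pow two_ne_zero).mul_left _)]
  intro h
  rcases hq.dvd_mul.1 (by exact_mod_cast h : q ∣ 3 ^ 6 * p) with hq3 | hqp
  · obtain rfl := (Nat.prime_dvd_prime_iff_eq hq Nat.prime_three).1 (hq.dvd_of_dvd_pow hq3)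
    have := not_three_dvd_add hp hp3 hxy
    omega
  · obtain rfl := (Nat.prime_dvd_prime_iff_eq hq hp).1 hqp
    exact not_dvd_two_mul_add_five_mul hp hp2 hp3 hxy hqb

theorem coprime_norm_resolventCube (hp : p.Prime) (hp2 : p ≠ 2) (hp3 : p ≠ 3)
    (hxy : (p : ℤ) = x ^ 2 + x * y + 3 * y ^ 2) : p.Coprime (resolventCube x y).norm.natAbs := by
  have hpZ := Nat.prime_iff_prime_int.1 hp
  rw [hp.coprime_iff_not_dvd, ← Int.natCast_dvd, norm_resolventCube, ← hxy,
    dvd_sub_right (dvd_mul_left _ _)]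
  intro h
  rcases hpZ.dvd_or_dvd h with h32 | hb
  · have hp32 : p ∣ 2 ^ 5 := Int.natCast_dvd_natCast.1 h32
    exact hp2 ((Nat.prime_dvd_prime_iff_eq hp Nat.prime_two).1 (hp.dvd_of_dvd_pow hp32))
  · exact not_dvd_two_mul_add_five_mul hp hp2 hp3 hxy (hpZ.dvd_of_dvd_pow hb)

variable {χ : DirichletCharacter EisensteinInt (resolventCube x y).norm.natAbs}

theorem apply_two_eq_one_iff (hp : p.Prime) (hp2 : p ≠ 2)
    (hxy : (p : ℤ) = x ^ 2 + x * y + 3 * y ^ 2) (hχ : IsCubicResidueChar (resolventCube x y) χ) :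
    χ 2 = 1 ↔ Even y := by
  have hnorm := odd_norm_resolventCube hp hp2 hxy
  have hcop : Nat.Coprime 2 (resolventCube x y).norm.natAbs :=
    Nat.coprime_two_left.2 (Int.natAbs_odd.2 hnorm)
  constructor
  · intro hχ2
    have hdvd := hχ.dvd 2 Nat.prime_two (by norm_num) hcop
    rw [gaussCube_eq_norm_mul, show χ ((2 : ℕ) : ZMod _) = 1 from mod_cast hχ2,
      show (2 ^ 2 - 1) / 3 = 1 from rfl, pow_one, natCast_dvd_iff] at hdvd
    have him : Even ((resolventCube x y).norm * (24 * x - 21 * y)) := by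
      simpa [resolventCube, even_iff_two_dvd] using hdvd.2
    have him' := (Int.even_mul.1 him).resolve_left (Int.not_even_iff_odd.2 hnorm)
    rw [Int.even_iff] at him' ⊢
    omega
  · intro hy
    have hx : Odd x := by
      have hodd : Odd (p : ℤ) := by exact_mod_cast hp.odd_of_ne_two hp2
      rw [hxy] at hodd
      simpa [hy, parity_simps] using hodd
    have hone : ((2 : ℕ) : EisensteinInt) ∣ (1 : ℤ) * resolventCube x y - (1 : ℤ) := by
      rw [natCast_dvd_iff]
      rw [Int.even_iff] at hy
      rw [Int.odd_iff] at hx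
      constructor <;>
        simp only [resolventCube, Nat.cast_ofNat, Int.cast_one, one_mul, re_sub, im_sub, re_one,
          im_one] <;>
        omega
    exact hχ.eq_one_of_dvd_mul_sub Nat.prime_two (by norm_num) hcop (by norm_num) (by norm_num) hone

theorem apply_prime_eq_one_of_dvd (hp : p.Prime) (hp2 : p ≠ 2) (hp3 : p ≠ 3)
    (hxy : (p : ℤ) = x ^ 2 + x * y + 3 * y ^ 2) (hχ : IsCubicResidueChar (resolventCube x y) χ)
    {q : ℕ} (hq : q.Prime) (hqb : (q : ℤ) ∣ 2 * x + 5 * y) : χ q = 1 := by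
  rcases eq_or_ne q 2 with rfl | hq2
  · refine (apply_two_eq_one_iff hp hp2 hxy hχ).2 ?_
    rw [Int.even_iff]
    omega
  have hqZ := Nat.prime_iff_prime_int.1 hq
  have hq3 : q ≠ 3 := by
    rintro rfl
    have := not_three_dvd_add hp hp3 hxy
    omega
  have hcop := coprime_norm_resolventCube_of_dvd hp hp2 hp3 hxy hq hqb
  have hq4 : ¬ (q : ℤ) ∣ 4 := fun h ↦ hq2 <| (Nat.prime_dvd_prime_iff_eq hq Nat.prime_two).1 <|
    hq.dvd_of_dvd_pow (Int.natCast_dvd_natCast.1 h : q ∣ 2 ^ 2)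
  have hqa : ¬ (q : ℤ) ∣ -27 * (8 * x - 7 * y) ^ 2 := by
    intro h
    have hnorm : (q : ℤ) ∣ 4 * (resolventCube x y).norm := by
      rw [show 4 * (resolventCube x y).norm =
          169 * (2 * x + 5 * y) ^ 2 - -27 * (8 * x - 7 * y) ^ 2 by rw [norm_resolventCube]; ring]
      exact dvd_sub ((hqb.pow two_ne_zero).mul_left 169) h
    exact hq.coprime_iff_not_dvd.1 hcop
      (Int.natCast_dvd.1 ((hqZ.dvd_or_dvd hnorm).resolve_left hq4))
  -- Modulo `q` the square of `resolventCube x y` is rational, so `χ q ^ 2 = 1`.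
  have hsq := (Int.cast_dvd_cast (α := EisensteinInt) _ _ hqb).trans
    (dvd_four_mul_resolventCube_sq_sub x y)
  have hχ2 := (hχ.mul hχ).eq_one_of_dvd_mul_sub hq hq3 hcop hq4 hqa hsq
  have hχ3 := hχ.apply_pow_three hcop
  rwa [pow_succ, sq, ← MulChar.mul_apply, hχ2, one_mul] at hχ3

theorem apply_eq_apply_two_sq (hp : p.Prime) (hp2 : p ≠ 2) (hp3 : p ≠ 3)
    (hxy : (p : ℤ) = x ^ 2 + x * y + 3 * y ^ 2) (hχ : IsCubicResidueChar (resolventCube x y) χ) :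
    χ p = χ 2 ^ 2 := by
  have hb : (2 * x + 5 * y).natAbs ≠ 0 := fun h ↦
    not_dvd_two_mul_add_five_mul hp hp2 hp3 hxy (by simp [Int.natAbs_eq_zero.1 h])
  have hχb : χ (2 * x + 5 * y).natAbs = 1 :=
    apply_natCast_eq_one_of_forall_prime χ hb fun q hq hqb ↦
      apply_prime_eq_one_of_dvd hp hp2 hp3 hxy hχ hq (Int.natCast_dvd.2 hqb)
  have hχ3 : χ ((3 : ℕ) : ZMod _) ^ 3 = 1 := by
    refine hχ.apply_pow_three (Nat.prime_three.coprime_iff_not_dvd.2 fun h ↦ ?_)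
    exact (isPrimary_resolventCube (not_three_dvd_add hp hp3 hxy)).not_three_dvd_norm
      (Int.natCast_dvd.2 h)
  have hχ2 : χ ((2 : ℕ) : ZMod _) ^ 3 = 1 :=
    hχ.apply_pow_three
      (Nat.coprime_two_left.2 (Int.natAbs_odd.2 (odd_norm_resolventCube hp hp2 hxy)))
  have hmod : ((3 ^ 6 * p : ℕ) : ZMod (resolventCube x y).norm.natAbs) =
      (2 ^ 5 * (2 * x + 5 * y).natAbs ^ 2 : ℕ) := by
    rw [← Int.cast_natCast, ← Int.cast_natCast (2 ^ 5 * _), ← sub_eq_zero, ← Int.cast_sub,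
      ZMod.intCast_zmod_eq_zero_iff_dvd, Int.natAbs_dvd, norm_resolventCube, ← hxy]
    push_cast [Int.natCast_natAbs, sq_abs]
    norm_num
  have hχmod := congrArg χ hmod
  simp only [Nat.cast_mul, Nat.cast_pow, map_mul, map_pow, hχb] at hχmod
  rw [Nat.cast_two] at hχmod hχ2
  linear_combination hχmod - χ p * (χ 3 ^ 3 + 1) * hχ3 + χ 2 ^ 2 * hχ2

theorem apply_eq_one_iff (hp : p.Prime) (hp2 : p ≠ 2) (hp3 : p ≠ 3)
    (hxy : (p : ℤ) = x ^ 2 + x * y + 3 * y ^ 2) (hχ : IsCubicResidueChar (resolventCube x y) χ) :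
    χ p = 1 ↔ Even y := by
  rw [apply_eq_apply_two_sq hp hp2 hp3 hxy hχ, ← apply_two_eq_one_iff hp hp2 hxy hχ]
  have hχ2 := hχ.apply_pow_three
    (Nat.coprime_two_left.2 (Int.natAbs_odd.2 (odd_norm_resolventCube hp hp2 hxy)))
  rw [Nat.cast_two] at hχ2
  constructor <;> intro h
  · rwa [pow_succ, h, one_mul] at hχ2
  · rw [h, one_pow]

section Vandermonde

variable {R : Type*} [CommRing R]

theorem sum_fin_three_shift {M : Type*} [AddCommMonoid M] (f : Fin 3 → M) (i : Fin 3) :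
    ∑ j, f j = f i + f (i + 1) + f (i + 2) := by
  rw [← Equiv.sum_comp (Equiv.addLeft i), Fin.sum_univ_three]
  simp only [Equiv.coe_addLeft, add_zero]

theorem det_vandermonde_fin_three (r : Fin 3 → R) :
    (Matrix.vandermonde r).det = (r 1 - r 0) * (r 2 - r 0) * (r 2 - r 1) := by
  simp only [Matrix.det_fin_three, Matrix.vandermonde_apply, Fin.val_zero, Fin.val_one,
    Fin.val_two]
  ring

theorem map_det_vandermonde {n : ℕ} {S : Type*} [CommRing S] {r : Fin n → R} {s : Fin n → S}
    {π : Equiv.Perm (Fin n)} (φ : R →+* S) (hπ : ∀ i, φ (r i) = s (π i)) :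
    φ (Matrix.vandermonde r).det = Equiv.Perm.sign π * (Matrix.vandermonde s).det := by
  rw [RingHom.map_det, ← Matrix.det_permute]
  congr 1
  ext i j
  simp [Matrix.vandermonde_apply, hπ]

end Vandermonde

theorem perm_fin_three_cases (π : Equiv.Perm (Fin 3)) :
    π = 1 ∨ (∃ i, π i = i ∧ π (i + 1) = i + 2 ∧ π (i + 2) = i + 1) ∨
      (∀ i, π i = i + 1) ∨ ∀ i, π i = i + 2 := by
  revert π
  decide

theorem exists_eq_add_of_sign_eq_one {π : Equiv.Perm (Fin 3)} (hπ : Equiv.Perm.sign π = 1) :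
    ∃ k, ∀ i, π i = i + k := by
  revert π
  decide

/-- `B` is the Berstel sequence. -/
structure IsBerstelSeq (B : ℕ → ℤ) : Prop where
  zero : B 0 = 0
  one : B 1 = 0
  two : B 2 = 1
  add_three : ∀ n, B (n + 3) = 2 * B (n + 2) - 4 * B (n + 1) + 4 * B n

open Polynomial in
/-- `r 0`, `r 1`, `r 2` are the roots, with multiplicity, of the characteristic polynomial of the
Berstel recurrence. -/
def IsRootTriple {R : Type*} [CommRing R] (r : Fin 3 → R) : Prop :=
  ∏ i, (X - C (r i)) = (⟨1, -2, 4, -4⟩ : Cubic R).toPoly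

namespace IsRootTriple

open Polynomial

section CommRing

variable {R : Type*} [CommRing R] {r : Fin 3 → R}

theorem comp_perm (hr : IsRootTriple r) (π : Equiv.Perm (Fin 3)) : IsRootTriple (r ∘ π) :=
  (Equiv.prod_comp π fun i ↦ X - C (r i)).trans hr

theorem prod_sub (hr : IsRootTriple r) (z : R) :
    ∏ i, (z - r i) = z ^ 3 - 2 * z ^ 2 + 4 * z - 4 := by
  have h := congrArg (eval z) hr
  simp only [eval_prod, eval_sub, eval_X, eval_C, Cubic.toPoly, eval_add, eval_mul, eval_pow] at h
  linear_combination h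

theorem pow_three (hr : IsRootTriple r) (i : Fin 3) :
    r i ^ 3 = 2 * r i ^ 2 - 4 * r i + 4 := by
  have h := hr.prod_sub (r i)
  rw [Finset.prod_eq_zero (Finset.mem_univ i) (sub_self _)] at h
  linear_combination -h

theorem vieta (hr : IsRootTriple r) (i : Fin 3) :
    r i + r (i + 1) + r (i + 2) = 2 ∧
      r i * r (i + 1) + r i * r (i + 2) + r (i + 1) * r (i + 2) = 4 ∧
      r i * r (i + 1) * r (i + 2) = 4 := by
  have h := hr.comp_perm (Equiv.addLeft i)
  rw [IsRootTriple, Fin.prod_univ_three, Cubic.prod_X_sub_C_eq, Cubic.toPoly_injective] at h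
  simp only [Function.comp_apply, Equiv.coe_addLeft, add_zero, Cubic.mk.injEq, true_and,
    neg_inj] at h
  exact h

theorem det_vandermonde_sq (hr : IsRootTriple r) : (Matrix.vandermonde r).det ^ 2 = -176 := by
  obtain ⟨hsum, hsum_mul, hprod⟩ := hr.vieta 0
  simp only [zero_add] at hsum hsum_mul hprod
  calc (Matrix.vandermonde r).det ^ 2
      = (r 0 + r 1 + r 2) ^ 2 * (r 0 * r 1 + r 0 * r 2 + r 1 * r 2) ^ 2 -
          4 * (r 0 * r 1 + r 0 * r 2 + r 1 * r 2) ^ 3 -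
          4 * (r 0 + r 1 + r 2) ^ 3 * (r 0 * r 1 * r 2) - 27 * (r 0 * r 1 * r 2) ^ 2 +
          18 * (r 0 + r 1 + r 2) * (r 0 * r 1 + r 0 * r 2 + r 1 * r 2) * (r 0 * r 1 * r 2) := by
        rw [det_vandermonde_fin_three]
        ring
    _ = -176 := by
        rw [hsum, hsum_mul, hprod]
        ring

theorem intCast_mul_det_vandermonde (hr : IsRootTriple r) {B : ℕ → ℤ}
    (hB : IsBerstelSeq B) :
    ∀ n, (B n : R) * (Matrix.vandermonde r).det = ∑ i, r i ^ n * (r (i + 2) - r (i + 1))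
  | 0 => by
    simp [hB.zero, sum_fin_three_shift _ 0]
  | 1 => by
    simp only [hB.one, Int.cast_zero, zero_mul, pow_one, Fin.sum_univ_three, zero_add,
      Fin.reduceAdd]
    ring
  | 2 => by
    simp only [hB.two, Int.cast_one, det_vandermonde_fin_three, one_mul, Fin.sum_univ_three,
      zero_add, Fin.reduceAdd]
    ring
  | n + 3 => by
    have hstep : ∀ i, r i ^ (n + 3) * (r (i + 2) - r (i + 1)) =
        2 * (r i ^ (n + 2) * (r (i + 2) - r (i + 1))) -
          4 * (r i ^ (n + 1) * (r (i + 2) - r (i + 1))) +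
          4 * (r i ^ n * (r (i + 2) - r (i + 1))) := fun i ↦ by
      linear_combination r i ^ n * (r (i + 2) - r (i + 1)) * hr.pow_three i
    simp only [hstep, Finset.sum_add_distrib, Finset.sum_sub_distrib, ← Finset.mul_sum,
      ← intCast_mul_det_vandermonde hr hB]
    rw [hB.add_three]
    push_cast
    ring

end CommRing

section Field

variable {F : Type*} [Field F] {r : Fin 3 → F}

theorem det_vandermonde_ne_zero (hr : IsRootTriple r) (h2 : (2 : F) ≠ 0) (h11 : (11 : F) ≠ 0) :
    (Matrix.vandermonde r).det ≠ 0 := by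
  intro h
  have hsq := hr.det_vandermonde_sq
  rw [h] at hsq
  exact mul_ne_zero (pow_ne_zero 4 h2) h11 (by linear_combination hsq)

theorem exists_perm_map_eq (hr : IsRootTriple r) (hinj : Function.Injective r) (φ : F →+* F) :
    ∃ π : Equiv.Perm (Fin 3), ∀ i, φ (r i) = r (π i) := by
  have hroot : ∀ i, ∃ j, φ (r i) = r j := by
    intro i
    have hprod : ∏ j, (φ (r i) - r j) = 0 := by
      have h := congrArg φ (hr.pow_three i)
      simp only [map_pow, map_add, map_sub, map_mul, map_ofNat] at h
      rw [hr.prod_sub]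
      linear_combination h
    obtain ⟨j, -, hj⟩ := Finset.prod_eq_zero_iff.1 hprod
    exact ⟨j, sub_eq_zero.1 hj⟩
  choose σ hσ using hroot
  have hσinj : Function.Injective σ := fun i j hij ↦
    hinj (φ.injective (by rw [hσ, hσ, hij]))
  exact ⟨Equiv.ofBijective σ (Finite.injective_iff_bijective.1 hσinj), hσ⟩

theorem three_mul_ne_two (hr : IsRootTriple r) (h2 : (2 : F) ≠ 0) (h13 : (13 : F) ≠ 0)
    (i : Fin 3) : 3 * r i ≠ 2 := fun h ↦
  mul_ne_zero (pow_ne_zero 2 h2) h13 <| by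
    linear_combination (9 * r i ^ 2 - 12 * r i + 28) * h - 27 * hr.pow_three i

theorem sum_perm_mul_sub_eq_zero_iff (hr : IsRootTriple r) (hinj : Function.Injective r)
    (h2 : (2 : F) ≠ 0) (h13 : (13 : F) ≠ 0) (π : Equiv.Perm (Fin 3)) :
    ∑ i, r (π i) * (r (i + 2) - r (i + 1)) = 0 ↔ π = 1 := by
  obtain ⟨hsum, hsum_mul, -⟩ := hr.vieta 0
  simp only [zero_add] at hsum hsum_mul
  constructor
  · intro h
    rcases perm_fin_three_cases π with hπ | ⟨i, hπ0, hπ1, hπ2⟩ | hπ | hπ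
    · exact hπ
    · obtain ⟨hsum, -, -⟩ := hr.vieta i
      simp only [sum_fin_three_shift _ i, hπ0, hπ1, hπ2, add_assoc, Fin.reduceAdd, add_zero] at h
      have hprod : (r (i + 2) - r (i + 1)) * (3 * r i - 2) = 0 := by
        linear_combination h + (r (i + 2) - r (i + 1)) * hsum
      rcases mul_eq_zero.1 hprod with hr0 | hr0
      · exact absurd (hinj (sub_eq_zero.1 hr0)) (by simp)
      · exact absurd (sub_eq_zero.1 hr0) (hr.three_mul_ne_two h2 h13 i)
    all_goals
      simp only [Fin.sum_univ_three, hπ, zero_add, Fin.reduceAdd] at h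
      refine absurd ?_ (pow_ne_zero 3 h2)
    · linear_combination h - 3 * hsum_mul + (r 0 + r 1 + r 2 + 2) * hsum
    · linear_combination -h - 3 * hsum_mul + (r 0 + r 1 + r 2 + 2) * hsum
  · rintro rfl
    simp only [Fin.sum_univ_three, Equiv.Perm.one_apply, zero_add, Fin.reduceAdd]
    ring

end Field

end IsRootTriple

theorem exists_isRootTriple (F : Type*) [Field F] [IsAlgClosed F] :
    ∃ r : Fin 3 → F, IsRootTriple r := by
  obtain ⟨x, y, z, h⟩ := (Cubic.splits_iff_roots_eq_three (φ := RingHom.id F)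
    (P := ⟨1, -2, 4, -4⟩) one_ne_zero).1 (IsAlgClosed.splits _)
  refine ⟨![x, y, z], ?_⟩
  have := Cubic.eq_prod_three_roots one_ne_zero h
  rw [IsRootTriple, Fin.prod_univ_three]
  simpa [Cubic.map] using this.symm

section LagrangeResolvent

variable {R : Type*} [CommRing R] {r : Fin 3 → R} {t : R}

/-- The Lagrange resolvent of `r 0`, `r 1`, `r 2` at a primitive cube root of unity `t`. -/
def lagrangeResolvent (t : R) (r : Fin 3 → R) : R := r 0 + t * r 1 + t ^ 2 * r 2

theorem pow_mul_lagrangeResolvent_shift (ht : t ^ 2 + t + 1 = 0) (r : Fin 3 → R) (k : Fin 3) :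
    t ^ (k : ℕ) * lagrangeResolvent t (fun i ↦ r (i + k)) = lagrangeResolvent t r := by
  fin_cases k <;>
    simp only [lagrangeResolvent, Fin.mk_zero, Fin.mk_one, Fin.reduceFinMk, zero_add, add_zero,
      Fin.reduceAdd]
  · ring
  · linear_combination (t - 1) * r 0 * ht
  · linear_combination (t - 1) * (r 0 + t * r 1) * ht

theorem IsRootTriple.lagrangeResolvent_mul (hr : IsRootTriple r) (ht : t ^ 2 + t + 1 = 0) :
    lagrangeResolvent t r * lagrangeResolvent (t ^ 2) r = -8 := by
  obtain ⟨hsum, hsum_mul, -⟩ := hr.vieta 0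
  simp only [zero_add] at hsum hsum_mul
  have ht2 : t ^ 2 = -1 - t := by linear_combination ht
  have ht4 : (t ^ 2) ^ 2 = t := by linear_combination (t ^ 2 - t) * ht
  rw [lagrangeResolvent, lagrangeResolvent, ht4, ht2]
  linear_combination (r 0 + r 1 + r 2 + 2) * hsum - 3 * hsum_mul - (r 1 - r 2) ^ 2 * ht

theorem IsRootTriple.two_mul_lagrangeResolvent_pow_three (hr : IsRootTriple r)
    (ht : t ^ 2 + t + 1 = 0) :
    2 * lagrangeResolvent t r ^ 3 = 52 - 3 * (2 * t + 1) * (Matrix.vandermonde r).det := by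
  obtain ⟨hsum, hsum_mul, hprod⟩ := hr.vieta 0
  simp only [zero_add] at hsum hsum_mul hprod
  have ht2 : t ^ 2 = -1 - t := by linear_combination ht
  rw [det_vandermonde_fin_three, lagrangeResolvent, ht2]
  linear_combination 2 * ((r 0 + r 1 + r 2) ^ 2 + 2 * (r 0 + r 1 + r 2) + 4) * hsum -
    9 * (r 0 * r 1 + r 0 * r 2 + r 1 * r 2) * hsum - 18 * hsum_mul + 27 * hprod +
    (6 * (r 0 - r 2) * (r 1 - r 2) ^ 2 + 2 * (r 1 - r 2) ^ 3 * (t - 1)) * ht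

end LagrangeResolvent

section Field

variable {F : Type*} [Field F] {r : Fin 3 → F} {t : F}

theorem IsRootTriple.lagrangeResolvent_ne_zero (hr : IsRootTriple r) (h2 : (2 : F) ≠ 0)
    (ht : t ^ 2 + t + 1 = 0) : lagrangeResolvent t r ≠ 0 :=
  left_ne_zero_of_mul (b := lagrangeResolvent (t ^ 2) r) <| by
    rw [hr.lagrangeResolvent_mul ht]
    exact fun h ↦ pow_ne_zero 3 h2 (by linear_combination -h)

theorem map_lagrangeResolvent_eq_self_iff (h3 : (3 : F) ≠ 0) (ht : t ^ 2 + t + 1 = 0)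
    (hu : lagrangeResolvent t r ≠ 0) (φ : F →+* F) (hφt : φ t = t) {k : Fin 3}
    (hφ : ∀ i, φ (r i) = r (i + k)) :
    φ (lagrangeResolvent t r) = lagrangeResolvent t r ↔ k = 0 := by
  have hφu : φ (lagrangeResolvent t r) = lagrangeResolvent t fun i ↦ r (i + k) := by
    simp only [lagrangeResolvent, map_add, map_mul, map_pow, hφt, hφ]
  have hshift := pow_mul_lagrangeResolvent_shift ht r k
  constructor
  · intro h
    rw [← hφu, h, mul_eq_right₀ hu] at hshift
    by_contra hk
    refine h3 ?_
    rcases (by omega : k = 1 ∨ k = 2) with rfl | rfl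
    · rw [Fin.val_one, pow_one] at hshift
      linear_combination ht - (t + 2) * hshift
    · rw [Fin.val_two] at hshift
      linear_combination hshift - (t - 2) * (ht - hshift)
  · rintro rfl
    simpa only [add_zero] using hφu

end Field

section CharP

variable {p : ℕ} [Fact p.Prime] {F : Type*} [Field F] [CharP F p] {r : Fin 3 → F}

theorem lagrangeResolvent_pow_sq_eq_self_iff {t : F} (h3 : (3 : F) ≠ 0) (ht : t ^ 2 + t + 1 = 0)
    (hu : lagrangeResolvent t r ≠ 0) {π : Equiv.Perm (Fin 3)} (hsign : Equiv.Perm.sign π = 1)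
    (hπ : ∀ i, frobenius F p (r i) = r (π i)) :
    lagrangeResolvent t r ^ p ^ 2 = lagrangeResolvent t r ↔ π = 1 := by
  obtain ⟨k, hk⟩ := exists_eq_add_of_sign_eq_one hsign
  have hp3 : ¬ 3 ∣ p := fun h ↦ h3 <| mod_cast (CharP.cast_eq_zero_iff F p 3).2
    ((Nat.prime_dvd_prime_iff_eq Nat.prime_three Fact.out).1 h ▸ dvd_rfl)
  have ht3 : t ^ 3 = 1 := by linear_combination (t - 1) * ht
  have htp : iterateFrobenius F p 2 t = t := by
    rw [iterateFrobenius_def, ← Nat.sub_add_cancel (Nat.one_le_pow 2 p (NeZero.pos p)), pow_succ]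
    obtain ⟨m, hm⟩ := EisensteinInt.three_dvd_sq_sub_one hp3
    rw [hm, pow_mul, ht3, one_pow, one_mul]
  have hr : ∀ i, iterateFrobenius F p 2 (r i) = r (i + (k + k)) := by
    intro i
    rw [iterateFrobenius_def, sq, pow_mul, ← frobenius_def, ← frobenius_def, hπ, hπ, hk, hk,
      add_assoc]
  rw [← iterateFrobenius_def, map_lagrangeResolvent_eq_self_iff h3 ht hu _ htp hr]
  constructor
  · intro hkk
    obtain rfl : k = 0 := by omega
    exact Equiv.ext fun i ↦ by rw [hk, add_zero, Equiv.Perm.one_apply]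
  · rintro rfl
    have hk0 := hk 0
    rw [Equiv.Perm.one_apply, zero_add] at hk0
    rw [← hk0, add_zero]

theorem IsRootTriple.intCast_eq_zero_iff (hr : IsRootTriple r) (h2 : (2 : F) ≠ 0)
    (h11 : (11 : F) ≠ 0) (h13 : (13 : F) ≠ 0) {B : ℕ → ℤ} (hB : IsBerstelSeq B)
    {π : Equiv.Perm (Fin 3)} (hπ : ∀ i, frobenius F p (r i) = r (π i)) :
    (B p : F) = 0 ↔ π = 1 := by
  have hV := hr.det_vandermonde_ne_zero h2 h11
  rw [← mul_eq_zero_iff_right hV, hr.intCast_mul_det_vandermonde hB,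
    ← hr.sum_perm_mul_sub_eq_zero_iff (Matrix.det_vandermonde_ne_zero_iff.1 hV) h2 h13]
  simp only [← hπ, frobenius_def]

theorem exists_dvd_sq_add_eleven (hr : IsRootTriple r) (h2 : (2 : F) ≠ 0)
    (hfrob : ∀ i, frobenius F p (r i) = r i) : ∃ m : ℤ, (p : ℤ) ∣ m ^ 2 + 11 := by
  have hV : frobenius F p (Matrix.vandermonde r).det = (Matrix.vandermonde r).det := by
    simpa using map_det_vandermonde (π := 1) (s := r) (frobenius F p) hfrob
  have hW : ((Matrix.vandermonde r).det / 4) ^ p = (Matrix.vandermonde r).det / 4 := by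
    rw [← frobenius_def, map_div₀, hV, map_ofNat]
  obtain ⟨m, hm⟩ := (mem_bot_iff_intCast p F).1
    ((Subfield.mem_bot_iff_pow_eq_self F p).2 hW)
  refine ⟨m, (CharP.intCast_eq_zero_iff F p _).1 ?_⟩
  have h4 : (4 : F) ≠ 0 := by
    convert pow_ne_zero 2 h2
    norm_num
  have hsq := hr.det_vandermonde_sq
  push_cast
  rw [hm, div_pow, hsq]
  field_simp
  norm_num

theorem sign_eq_one_of_frobenius_det_eq (h2 : (2 : F) ≠ 0)
    (hV0 : (Matrix.vandermonde r).det ≠ 0)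
    {π : Equiv.Perm (Fin 3)} (hπ : ∀ i, frobenius F p (r i) = r (π i))
    (hV : frobenius F p (Matrix.vandermonde r).det = (Matrix.vandermonde r).det) :
    Equiv.Perm.sign π = 1 := by
  rw [map_det_vandermonde _ hπ, mul_eq_right₀ hV0] at hV
  refine (Int.units_eq_one_or _).resolve_right fun hneg ↦ h2 ?_
  rw [hneg] at hV
  push_cast at hV
  linear_combination -hV

end CharP

section Reduction

variable {p : ℕ} {F : Type*} [Field F] [CharP F p] {r : Fin 3 → F} {x y : ℤ}

theorem ofNat_ne_zero_of_not_dvd (n : ℕ) [n.AtLeastTwo] (hn : ¬ p ∣ n) :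
    (OfNat.ofNat n : F) ≠ 0 := by
  rwa [← Nat.cast_ofNat, Ne, CharP.cast_eq_zero_iff F p]

theorem IsRootTriple.det_vandermonde_mul_eq_or (hr : IsRootTriple r)
    (hxy : (p : ℤ) = x ^ 2 + x * y + 3 * y ^ 2) :
    (Matrix.vandermonde r).det * (2 * x + 5 * y : ℤ) = (4 * (8 * x - 7 * y) : ℤ) ∨
      (Matrix.vandermonde r).det * (2 * x + 5 * y : ℤ) = -(4 * (8 * x - 7 * y) : ℤ) := by
  have hp : ((x ^ 2 + x * y + 3 * y ^ 2 : ℤ) : F) = 0 := by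
    rw [← hxy, Int.cast_natCast, CharP.cast_eq_zero]
  rw [← sq_eq_sq_iff_eq_or_eq_neg, mul_pow, hr.det_vandermonde_sq]
  push_cast at hp ⊢
  linear_combination -1728 * hp

theorem IsRootTriple.exists_map_gaussCube_eq (hr : IsRootTriple r)
    (hxy : (p : ℤ) = x ^ 2 + x * y + 3 * y ^ 2) (h : EisensteinInt →+* F) :
    ∃ t : F, t ^ 2 + t + 1 = 0 ∧ h (gaussCube (resolventCube x y)) =
      ((-2 * (2 * x + 5 * y) : ℤ) * lagrangeResolvent t r) ^ 3 := by
  have hω := map_omega_sq_add h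
  have hp : (p : F) = 0 := CharP.cast_eq_zero F p
  have hC : 2 * h (resolventCube x y) =
      13 * (2 * x + 5 * y) + 3 * (8 * x - 7 * y) * (2 * h ω + 1) := by
    simpa only [map_mul, map_add, map_sub, map_intCast, map_ofNat, map_one] using
      congrArg h (two_mul_resolventCube x y)
  have hgauss : h (gaussCube (resolventCube x y)) =
      -16 * (2 * x + 5 * y) ^ 2 * (2 * h (resolventCube x y)) := by
    rw [gaussCube_eq_norm_mul, norm_resolventCube, ← hxy, map_mul, map_intCast]
    push_cast
    linear_combination 729 * h (resolventCube x y) * hp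
  have hcube : ∀ t : F, t ^ 2 + t + 1 = 0 →
      (2 * t + 1) * ((Matrix.vandermonde r).det * (2 * x + 5 * y)) =
        -(4 * (8 * x - 7 * y)) * (2 * h ω + 1) →
      h (gaussCube (resolventCube x y)) =
        ((-2 * (2 * x + 5 * y) : ℤ) * lagrangeResolvent t r) ^ 3 := by
    intro t ht hV
    have hu := hr.two_mul_lagrangeResolvent_pow_three ht
    push_cast
    linear_combination hgauss - 16 * (2 * x + 5 * y) ^ 2 * hC + 4 * (2 * x + 5 * y) ^ 3 * hu -
      12 * (2 * x + 5 * y) ^ 2 * hV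
  rcases hr.det_vandermonde_mul_eq_or hxy with hV | hV <;> push_cast at hV
  · have hω2 : (h ω ^ 2) ^ 2 + h ω ^ 2 + 1 = 0 := by
      linear_combination (h ω ^ 2 - h ω + 1) * hω
    refine ⟨h ω ^ 2, hω2, hcube _ hω2 ?_⟩
    linear_combination (2 * h ω ^ 2 + 1) * hV + 8 * (8 * x - 7 * y) * hω
  · refine ⟨h ω, hω, hcube _ hω ?_⟩
    linear_combination (2 * h ω + 1) * hV

variable [Fact p.Prime]

theorem IsRootTriple.frobenius_det_vandermonde (hr : IsRootTriple r)
    (hxy : (p : ℤ) = x ^ 2 + x * y + 3 * y ^ 2) (hb : ((2 * x + 5 * y : ℤ) : F) ≠ 0) :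
    frobenius F p (Matrix.vandermonde r).det = (Matrix.vandermonde r).det := by
  refine mul_right_cancel₀ hb ?_
  nth_rw 1 [← map_intCast (frobenius F p)]
  rw [← map_mul]
  rcases hr.det_vandermonde_mul_eq_or hxy with h | h <;>
    simp only [h, map_neg, map_intCast]

theorem lagrangeResolvent_pow_sq_eq_self_iff_apply_eq_one (h2 : p ≠ 2) (h3 : p ≠ 3)
    (hxy : (p : ℤ) = x ^ 2 + x * y + 3 * y ^ 2)
    {χ : DirichletCharacter EisensteinInt (resolventCube x y).norm.natAbs}
    (hχ : IsCubicResidueChar (resolventCube x y) χ) (h : EisensteinInt →+* F)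
    {t : F} (hu : lagrangeResolvent t r ≠ 0)
    (ht : h (gaussCube (resolventCube x y)) =
      ((-2 * (2 * x + 5 * y) : ℤ) * lagrangeResolvent t r) ^ 3) :
    lagrangeResolvent t r ^ p ^ 2 = lagrangeResolvent t r ↔ χ p = 1 := by
  have hp : p.Prime := Fact.out
  have hcop := coprime_norm_resolventCube hp h2 h3 hxy
  have hp3 : ¬ 3 ∣ p := fun h3p ↦ h3 ((Nat.prime_dvd_prime_iff_eq Nat.prime_three hp).1 h3p).symm
  have hm : ¬ (p : ℤ) ∣ -2 * (2 * x + 5 * y) := fun hdvd ↦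
    ((Nat.prime_iff_prime_int.1 hp).dvd_or_dvd hdvd).elim
      (fun hp2 ↦ h2 ((Nat.prime_dvd_prime_iff_eq hp Nat.prime_two).1
        (Int.natCast_dvd_natCast.1 ((dvd_neg (b := (2 : ℤ))).1 hp2))))
      (not_dvd_two_mul_add_five_mul hp h2 h3 hxy)
  have hmF : ((-2 * (2 * x + 5 * y) : ℤ) : F) ^ (p ^ 2 - 1) = 1 := by
    rw [← sub_eq_zero]
    exact_mod_cast (CharP.intCast_eq_zero_iff F p _).2 (prime_dvd_pow_sq_sub_one_sub_one hp hm)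
  have hmap : h (χ p) = lagrangeResolvent t r ^ (p ^ 2 - 1) := by
    obtain ⟨w, hw⟩ := hχ.dvd p hp h3 hcop
    have hw' := congrArg h hw
    rw [map_sub, map_mul, map_natCast h, CharP.cast_eq_zero F, zero_mul, sub_eq_zero, map_pow, ht,
      ← pow_mul, Nat.mul_div_cancel' (three_dvd_sq_sub_one hp3), mul_pow, hmF, one_mul] at hw'
    exact hw'.symm
  have h3F : (3 : F) ≠ 0 := ofNat_ne_zero_of_not_dvd (p := p) 3 fun h3p ↦
    h3 ((Nat.prime_dvd_prime_iff_eq hp Nat.prime_three).1 h3p)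
  rw [← map_eq_one_iff_of_pow_three h3F h (hχ.apply_pow_three hcop), hmap,
    ← mul_eq_right₀ hu, ← pow_succ, Nat.sub_add_cancel (Nat.one_le_pow 2 p hp.pos)]

end Reduction

section Divisibility

variable {B : ℕ → ℤ} {p : ℕ}

theorem exists_eq_sq_add_mul_add_three_mul_sq_of_dvd (hB : IsBerstelSeq B) (hp : p.Prime)
    (hpe : ¬ p ∣ 2 * 11 * 13) (hBp : (p : ℤ) ∣ B p) :
    ∃ x y : ℤ, (p : ℤ) = x ^ 2 + x * y + 3 * y ^ 2 := by
  have := Fact.mk hp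
  let F := AlgebraicClosure (ZMod p)
  have hne : ∀ n : ℕ, [n.AtLeastTwo] → n ∣ 2 * 11 * 13 → (OfNat.ofNat n : F) ≠ 0 :=
    fun n _ hn ↦ ofNat_ne_zero_of_not_dvd (p := p) n fun h ↦ hpe (h.trans hn)
  have h2 := hne 2 (by norm_num)
  have h11 := hne 11 (by norm_num)
  obtain ⟨r, hr⟩ := exists_isRootTriple F
  have hV := hr.det_vandermonde_ne_zero h2 h11
  obtain ⟨π, hπ⟩ := hr.exists_perm_map_eq (Matrix.det_vandermonde_ne_zero_iff.1 hV) (frobenius F p)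
  have hBF : (B p : F) = 0 := (CharP.intCast_eq_zero_iff F p _).2 hBp
  obtain rfl := (hr.intCast_eq_zero_iff h2 h11 (hne 13 (by norm_num)) hB hπ).1 hBF
  obtain ⟨m, hm⟩ := exists_dvd_sq_add_eleven (p := p) hr h2 hπ
  exact ImaginaryQuadratic.exists_eq_sq_add_mul_add_three_mul_sq hp
    (fun hp2 ↦ hpe (hp2.dvd.trans (by norm_num))) hm

theorem dvd_iff_even (hB : IsBerstelSeq B) (hp : p.Prime)
    (hpe : ¬ p ∣ 2 * 3 * 11 * 13) {x y : ℤ} (hxy : (p : ℤ) = x ^ 2 + x * y + 3 * y ^ 2) :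
    (p : ℤ) ∣ B p ↔ Even y := by
  have := Fact.mk hp
  let F := AlgebraicClosure (ZMod p)
  have hne : ∀ n : ℕ, [n.AtLeastTwo] → n ∣ 2 * 3 * 11 * 13 → (OfNat.ofNat n : F) ≠ 0 :=
    fun n _ hn ↦ ofNat_ne_zero_of_not_dvd (p := p) n fun h ↦ hpe (h.trans hn)
  have h2 := hne 2 (by norm_num)
  have h3 := hne 3 (by norm_num)
  have h11 := hne 11 (by norm_num)
  have hp2 : p ≠ 2 := fun h ↦ hpe (h.dvd.trans (by norm_num))
  have hp3 : p ≠ 3 := fun h ↦ hpe (h.dvd.trans (by norm_num))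
  obtain ⟨r, hr⟩ := exists_isRootTriple F
  have hV := hr.det_vandermonde_ne_zero h2 h11
  obtain ⟨π, hπ⟩ := hr.exists_perm_map_eq (Matrix.det_vandermonde_ne_zero_iff.1 hV) (frobenius F p)
  have hb : ((2 * x + 5 * y : ℤ) : F) ≠ 0 :=
    (CharP.intCast_eq_zero_iff F p _).not.2 (not_dvd_two_mul_add_five_mul hp hp2 hp3 hxy)
  have hsign := sign_eq_one_of_frobenius_det_eq h2 hV hπ (hr.frobenius_det_vandermonde hxy hb)
  obtain ⟨χ, hχ⟩ :=
    (isPrimary_resolventCube (not_three_dvd_add hp hp3 hxy)).exists_isCubicResidueChar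
  obtain ⟨h⟩ := nonempty_ringHom F
  obtain ⟨t, ht, hgauss⟩ := hr.exists_map_gaussCube_eq hxy h
  have hu := hr.lagrangeResolvent_ne_zero h2 ht
  calc (p : ℤ) ∣ B p
      ↔ (B p : F) = 0 := (CharP.intCast_eq_zero_iff F p _).symm
    _ ↔ π = 1 := hr.intCast_eq_zero_iff h2 h11 (hne 13 (by norm_num)) hB hπ
    _ ↔ lagrangeResolvent t r ^ p ^ 2 = lagrangeResolvent t r :=
        (lagrangeResolvent_pow_sq_eq_self_iff h3 ht hu hsign hπ).symm
    _ ↔ χ p = 1 :=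
        lagrangeResolvent_pow_sq_eq_self_iff_apply_eq_one hp2 hp3 hxy hχ h hu hgauss
    _ ↔ Even y := apply_eq_one_iff hp hp2 hp3 hxy hχ

end Divisibility

end Berstel

theorem berstel_divisibility (B : ℕ → ℤ)
    (h0 : B 0 = 0) (h1 : B 1 = 0) (h2 : B 2 = 1)
    (hrec : ∀ n, B (n + 3) = 2 * B (n + 2) - 4 * B (n + 1) + 4 * B n)
    (p : ℕ) (hp : p.Prime) (hpe : ¬ (p ∣ 2 * 3 * 11 * 13)) :
    (p : ℤ) ∣ B p ↔ ∃ X Y : ℤ, (p : ℤ) = X ^ 2 + 11 * Y ^ 2 := by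
  have hB : Berstel.IsBerstelSeq B := ⟨h0, h1, h2, hrec⟩
  constructor
  · intro hdvd
    have hpe' : ¬ p ∣ 2 * 11 * 13 := fun h ↦ hpe (h.trans (by norm_num))
    obtain ⟨x, y, hxy⟩ :=
      Berstel.exists_eq_sq_add_mul_add_three_mul_sq_of_dvd hB hp hpe' hdvd
    obtain ⟨k, rfl⟩ := (Berstel.dvd_iff_even hB hp hpe hxy).1 hdvd
    exact ⟨x + k, k, by rw [hxy]; ring⟩
  · rintro ⟨X, Y, hXY⟩
    have hxy : (p : ℤ) = (X - Y) ^ 2 + (X - Y) * (2 * Y) + 3 * (2 * Y) ^ 2 := by rw [hXY]; ring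
    exact (Berstel.dvd_iff_even hB hp hpe hxy).2 (even_two_mul Y)
end
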